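/- arXiv:1006.0590 — 2 statements merged into one kernel-verified Lean document; each statement's English description precedes it below -/
import Mathlib

section
/- If G is a digraph with κ(G) ≥ 2^{α₂(G)} · (α₂(G) + 2)!, then G has a Hamilton cycle. -/
/-- `f` is a Hamilton cycle of the digraph `G`. -/
def IsHamCycle {V : Type*} [Fintype V] (G : V → V → Prop)
    (f : ZMod (Fintype.card V) → V) : Prop :=
  Function.Bijective f ∧ ∀ i, G (f i) (f (i + 1))

/-- The digraph `G` restricted to the set `A` is strongly connected: between any two
vertices of `A` there is a directed path all of whose vertices lie in `A`. -/
def StrongOn {V : Type*} (G : V → V → Prop) (A : Set V) : Prop :=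
  ∀ x ∈ A, ∀ y ∈ A, Relation.ReflTransGen (fun a b => a ∈ A ∧ b ∈ A ∧ G a b) x y

/-- The connectivity κ(G): the size of a smallest vertex set `S` such that `G − S` is
not strongly connected or consists of a single vertex. -/
noncomputable def kappa {V : Type*} [Fintype V] (G : V → V → Prop) : ℕ :=
  sInf {k | ∃ S : Set V, S.ncard = k ∧ (¬ StrongOn G Sᶜ ∨ Sᶜ.ncard = 1)}

/-- α₂(G): the size of a largest vertex set containing no 2-cycle. -/
noncomputable def alphaTwo {V : Type*} [Fintype V] (G : V → V → Prop) : ℕ :=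
  sSup {k | ∃ S : Set V, S.ncard = k ∧ ∀ x ∈ S, ∀ y ∈ S, ¬ (G x y ∧ G y x)}

/-!
Let `H` be the graph of the 2-cycles of `G` and `α = α₂(G)`, its independence number. As long as
some piece of `H` is separated by few vertices, delete these and split the piece; since no
edge of `H` joins different pieces, at most `α` pieces arise and few vertices are lost. Every
piece is then so highly connected that, by the Chvátal–Erdős theorem, it has a Hamilton path
with prescribed ends, and this remains true after the deletion of any few other vertices. By the
Gallai–Milgram theorem the lost vertices are covered by at most `α` paths of `H`.

A shortest directed path between two vertices of a strongly connected subdigraph has at most `2α`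
vertices, because every second one of them can be chosen to form a set without 2-cycles. So the
high connectivity of `G` yields disjoint short links which join the end of each of the at most `2α`
paths to the start of the next one. The links may run through the highly connected pieces, which
are then traversed by Hamilton paths avoiding them. A cubic lower bound on `κ(G)` in terms of `α`
suffices for all of this.
-/

open Finset

section StrongOn

variable {V : Type*} {r : V → V → Prop}

theorem strongOn_iff_exists_rel {A : Set V} :
    StrongOn r A ↔
      ∀ X ⊆ A, X.Nonempty → (A \ X).Nonempty → ∃ x ∈ X, ∃ y ∈ A \ X, r x y := by
  refine ⟨fun h X hXA ⟨x, hx⟩ ⟨y, hyA, hyX⟩ => ?_, fun h x hx y hy => ?_⟩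
  · by_contra! hX
    have closed : ∀ z, Relation.ReflTransGen (fun a b => a ∈ A ∧ b ∈ A ∧ r a b) x z → z ∈ X := by
      intro z hz
      induction hz with
      | refl => exact hx
      | tail _ hbc ih => exact by_contra fun hc => hX _ ih _ ⟨hbc.2.1, hc⟩ hbc.2.2
    exact hyX (closed y (h x (hXA hx) y hyA))
  · by_contra hxy
    obtain ⟨u, ⟨huA, hu⟩, v, ⟨hvA, hv⟩, huv⟩ := h
      {z ∈ A | Relation.ReflTransGen (fun a b => a ∈ A ∧ b ∈ A ∧ r a b) x z}
      (Set.sep_subset _ _) ⟨x, hx, .refl⟩ ⟨y, hy, fun hy' => hxy hy'.2⟩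
    exact hv ⟨hvA, hu.tail ⟨huA, hvA, huv⟩⟩

theorem exists_cut_of_not_strongOn [DecidableEq V] {A : Finset V} (hA : ¬ StrongOn r A) :
    ∃ X Y : Finset V, X.Nonempty ∧ Y.Nonempty ∧ Disjoint X Y ∧ X ∪ Y = A ∧
      ∀ x ∈ X, ∀ y ∈ Y, ¬ r x y := by
  rw [strongOn_iff_exists_rel] at hA
  push Not at hA
  obtain ⟨X, hXA, hX, hY, hXY⟩ := hA
  lift X to Finset V using A.finite_toSet.subset hXA
  norm_cast at hXA hX hY hXY
  exact ⟨X, A \ X, hX, hY, disjoint_sdiff, union_sdiff_of_subset hXA, hXY⟩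

theorem exists_terminal_strongOn {W : Finset V} (hW : W.Nonempty) :
    ∃ D ⊆ W, D.Nonempty ∧ StrongOn r (D : Set V) ∧ ∀ x ∈ D, ∀ y ∈ W, r x y → y ∈ D := by
  classical
  obtain ⟨D, ⟨hDW, hD, hDclosed⟩, hmin⟩ := exists_minimal_of_wellFoundedLT
    (fun D : Finset V => D ⊆ W ∧ D.Nonempty ∧ ∀ x ∈ D, ∀ y ∈ W, r x y → y ∈ D)
    ⟨W, Subset.rfl, hW, fun _ _ _ hy _ => hy⟩
  refine ⟨D, hDW, hD, ?_, hDclosed⟩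
  by_contra hcut
  obtain ⟨X, Y, hX, ⟨y, hy⟩, hdisj, rfl, hXY⟩ := exists_cut_of_not_strongOn hcut
  have hXclosed : ∀ x ∈ X, ∀ z ∈ W, r x z → z ∈ X := fun x hx z hz hxz =>
    (mem_union.1 (hDclosed x (mem_union_left Y hx) z hz hxz)).resolve_right
      fun hzY => hXY x hx z hzY hxz
  have hyX := hmin ⟨subset_union_left.trans hDW, hX, hXclosed⟩ subset_union_left
    (mem_union_right X hy)
  exact disjoint_left.1 hdisj hyX hy

end StrongOn

section Path

variable {V : Type*} [DecidableEq V]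

/-- `IsPathOn r a b A`: there is a directed `r`-path from `a` to `b` whose set of vertices is
exactly `A`. The path itself is not recorded: paths are only ever spliced along their vertex
sets. -/
inductive IsPathOn (r : V → V → Prop) : V → V → Finset V → Prop
  | singleton (a : V) : IsPathOn r a a {a}
  | cons {a b c : V} {A : Finset V} (hab : r a b) (ha : a ∉ A) (h : IsPathOn r b c A) :
      IsPathOn r a c (insert a A)

namespace IsPathOn

variable {r s : V → V → Prop} {a b c d : V} {A B : Finset V}

theorem mono (hrs : ∀ x y, r x y → s x y) (h : IsPathOn r a b A) : IsPathOn s a b A := by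
  induction h with
  | singleton a => exact singleton a
  | cons hab ha _ ih => exact cons (hrs _ _ hab) ha ih

theorem left_mem (h : IsPathOn r a b A) : a ∈ A := by
  cases h <;> simp

theorem right_mem (h : IsPathOn r a b A) : b ∈ A := by
  induction h with
  | singleton a => exact mem_singleton_self a
  | cons _ _ _ ih => exact mem_insert_of_mem ih

theorem eq_singleton (h : IsPathOn r a a A) : A = {a} := by
  cases h with
  | singleton => rfl
  | cons _ ha h => exact absurd h.right_mem ha

theorem append (h : IsPathOn r a b A) (hbc : r b c) (h' : IsPathOn r c d B)
    (hAB : Disjoint A B) : IsPathOn r a d (A ∪ B) := by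
  induction h with
  | singleton b => exact cons hbc (disjoint_singleton_left.1 hAB) h'
  | @cons a _ b A haa' ha _ ih =>
    rw [disjoint_insert_left] at hAB
    rw [insert_union]
    exact cons haa' (by simp [ha, hAB.1]) (ih hbc hAB.2)

theorem trans (h : IsPathOn r a b A) (h' : IsPathOn r b c B) (hAB : A ∩ B ⊆ {b}) :
    IsPathOn r a c (A ∪ B) := by
  induction h with
  | singleton b => rwa [union_eq_right.2 (singleton_subset_iff.2 h'.left_mem)]
  | @cons a _ b A haa' ha h ih =>
    have haB : a ∉ B := fun haB => ha <| by
      have hab := mem_singleton.1 (hAB (mem_inter.2 ⟨mem_insert_self a A, haB⟩))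
      exact hab ▸ h.right_mem
    rw [insert_union]
    exact cons haa' (by simp [ha, haB])
      (ih h' ((inter_subset_inter_right (subset_insert a A)).trans hAB))

theorem reverse (hr : ∀ x y, r x y → r y x) (h : IsPathOn r a b A) : IsPathOn r b a A := by
  induction h with
  | singleton a => exact singleton a
  | @cons a _ _ A hab ha _ ih =>
    rw [insert_eq, union_comm]
    exact ih.append (hr _ _ hab) (singleton a) (disjoint_singleton_right.2 ha)

theorem exists_subset_of_mem (h : IsPathOn r a b A) (hc : c ∈ A) :
    ∃ B ⊆ A, IsPathOn r c b B := by
  induction h with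
  | singleton a =>
    obtain rfl := mem_singleton.1 hc
    exact ⟨{c}, Subset.rfl, singleton c⟩
  | @cons a _ _ A hab ha h ih =>
    rcases mem_insert.1 hc with rfl | hc
    · exact ⟨_, Subset.rfl, cons hab ha h⟩
    · obtain ⟨B, hB, hcB⟩ := ih hc
      exact ⟨B, hB.trans (subset_insert a A), hcB⟩

end IsPathOn

theorem StrongOn.exists_isPathOn {r : V → V → Prop} {X : Set V} (hX : StrongOn r X) {a b : V}
    (ha : a ∈ X) (hb : b ∈ X) : ∃ A : Finset V, (A : Set V) ⊆ X ∧ IsPathOn r a b A := by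
  induction hX a ha b hb using Relation.ReflTransGen.head_induction_on with
  | refl => exact ⟨{b}, by simpa using hb, .singleton b⟩
  | @head a c hac _ ih =>
    obtain ⟨A, hAX, hA⟩ := ih hac.2.1
    by_cases haA : a ∈ A
    · obtain ⟨B, hBA, hB⟩ := hA.exists_subset_of_mem haA
      exact ⟨B, (coe_subset.2 hBA).trans hAX, hB⟩
    · exact ⟨insert a A, by simpa [Set.insert_subset_iff] using ⟨ha, hAX⟩, .cons hac.2.2 haA hA⟩

/-- The graph joining `x` and `y` when `x → y → x` is a directed cycle of length 2, so that
`α₂` becomes an ordinary independence number. -/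
abbrev twoCycleGraph {V : Type*} (r : V → V → Prop) : SimpleGraph V :=
  Digraph.toSimpleGraphStrict ⟨r⟩

-- Along a shortest path every second vertex can be chosen: all its chords point backwards.
theorem IsPathOn.exists_isIndepSet_of_minimal {r : V → V → Prop} {a b : V} {A : Finset V}
    (hA : Minimal (IsPathOn r a b) A) :
    ∃ I ⊆ A, (twoCycleGraph r).IsIndepSet I ∧ #A ≤ 2 * #I := by
  induction A using Finset.strongInduction generalizing a with
  | H A ih =>
  obtain ⟨hpath, hmin⟩ := hA
  cases hpath with
  | singleton => exact ⟨{b}, Subset.rfl, by simp, by simp⟩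
  | @cons _ c _ A hac ha hpath =>
  cases hpath with
  | singleton => exact ⟨{a}, by simp, by simp, by simpa using card_le_two⟩
  | @cons _ d _ B hcd hc hpath =>
  have hB : Minimal (IsPathOn r d b) B := by
    refine ⟨hpath, fun B' hB' hBB' x hx => ?_⟩
    have hpath' : IsPathOn r a b (insert a (insert c B')) :=
      .cons hac (fun h => ha (insert_subset_insert c hBB' h)) (.cons hcd (fun h => hc (hBB' h)) hB')
    have := hmin hpath' (insert_subset_insert a (insert_subset_insert c hBB'))
      (mem_insert_of_mem (mem_insert_of_mem hx))
    grind
  have no_chord : ∀ z ∈ B, ¬ r a z := by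
    intro z hz haz
    obtain ⟨B', hB'B, hB'⟩ := hpath.exists_subset_of_mem hz
    have hpath' : IsPathOn r a b (insert a B') := .cons haz (by grind) hB'
    have := hmin hpath' (by grind) (mem_insert_of_mem (mem_insert_self c B))
    grind
  obtain ⟨I, hIB, hI, hcard⟩ := ih B (by grind) hB
  have haI : a ∉ I := fun h => ha (mem_insert_of_mem (hIB h))
  refine ⟨insert a I, by grind, ?_, ?_⟩
  · rw [coe_insert]
    refine hI.insert fun z hz _ => ⟨fun h => no_chord z (hIB hz) h.2.1,
      fun h => no_chord z (hIB hz) h.2.2⟩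
  · rw [card_insert_of_notMem haI, card_insert_of_notMem ha, card_insert_of_notMem hc]
    lia

theorem StrongOn.exists_isPathOn_card_le {r : V → V → Prop} {X : Set V} (hX : StrongOn r X)
    {α : ℕ} (hα : ∀ I : Finset V, (twoCycleGraph r).IsIndepSet I → #I ≤ α) {a b : V}
    (ha : a ∈ X) (hb : b ∈ X) :
    ∃ A : Finset V, (A : Set V) ⊆ X ∧ IsPathOn r a b A ∧ #A ≤ 2 * α := by
  obtain ⟨A₀, hA₀X, hA₀⟩ := hX.exists_isPathOn ha hb
  obtain ⟨A, hAA₀, hA⟩ := exists_minimal_le_of_wellFoundedLT (IsPathOn r a b) A₀ hA₀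
  obtain ⟨I, -, hI, hcard⟩ := IsPathOn.exists_isIndepSet_of_minimal hA
  exact ⟨A, (coe_subset.2 hAA₀).trans hA₀X, hA.prop,
    hcard.trans (Nat.mul_le_mul_left 2 (hα I hI))⟩

end Path

section ChvatalErdos

variable {V : Type*} [DecidableEq V]

/-- `IsPathSeq r f n`: the vertices `f 0, …, f n` are distinct and form, in this order, a directed
`r`-path. The values of `f` beyond `n` are irrelevant. -/
structure IsPathSeq {V : Type*} (r : V → V → Prop) (f : ℕ → V) (n : ℕ) : Prop where
  injOn : Set.InjOn f (Set.Iic n)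
  rel : ∀ i < n, r (f i) (f (i + 1))

theorem IsPathOn.exists_isPathSeq {r : V → V → Prop} {a b : V} {A : Finset V}
    (h : IsPathOn r a b A) :
    ∃ f n, IsPathSeq r f n ∧ f 0 = a ∧ f n = b ∧ (Icc 0 n).image f = A := by
  induction h with
  | singleton a => exact ⟨fun _ => a, 0, ⟨by simp [Set.InjOn], by simp⟩, rfl, rfl, by simp⟩
  | @cons a _ _ A hab ha _ ih =>
    obtain ⟨f, n, hf, rfl, rfl, rfl⟩ := ih
    refine ⟨fun i => i.casesOn a f, n + 1, ⟨?_, ?_⟩, rfl, rfl, ?_⟩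
    · have ha' : ∀ i ≤ n, f i ≠ a := fun i hi h => ha (mem_image.2 ⟨i, by simpa using hi, h⟩)
      rintro (_ | i) hi (_ | j) hj hij
      · rfl
      · exact absurd hij.symm (ha' j (Nat.succ_le_succ_iff.1 hj))
      · exact absurd hij (ha' i (Nat.succ_le_succ_iff.1 hi))
      · rw [hf.injOn (Nat.succ_le_succ_iff.1 hi) (Nat.succ_le_succ_iff.1 hj) hij]
    · rintro (_ | i) hi
      · exact hab
      · exact hf.rel i (Nat.succ_lt_succ_iff.1 hi)
    · rw [← insert_Icc_add_one_left_eq_Icc (Nat.zero_le _), image_insert,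
        ← image_add_right_Icc 0 n 1, image_image]
      rfl

namespace IsPathSeq

variable {r : V → V → Prop} {f : ℕ → V} {n i j : ℕ}

theorem isPathOn_image_Icc (hf : IsPathSeq r f n) (hij : i ≤ j) (hj : j ≤ n) :
    IsPathOn r (f i) (f j) ((Icc i j).image f) := by
  induction j, hij using Nat.le_induction with
  | base => simpa using IsPathOn.singleton (f i)
  | succ j hij ih =>
    have hnew : f (j + 1) ∉ (Icc i j).image f := by
      simp only [mem_image, mem_Icc, not_exists, not_and]
      intro k hk hkj
      have := hf.injOn (show k ≤ n by lia) hj hkj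
      lia
    rw [← insert_Icc_right_eq_Icc_add_one (by lia), image_insert, insert_eq, union_comm]
    exact (ih (by lia)).append (hf.rel j hj) (.singleton _) (disjoint_singleton_right.2 hnew)

theorem disjoint_image_Icc (hf : IsPathSeq r f n) {k l : ℕ} (hj : j ≤ n) (hl : l ≤ n)
    (hjk : j < k) : Disjoint ((Icc i j).image f) ((Icc k l).image f) := by
  simp only [disjoint_left, mem_image, mem_Icc]
  rintro _ ⟨x, hx, rfl⟩ ⟨y, hy, hyx⟩
  have := hf.injOn (show y ≤ n by lia) (show x ≤ n by lia) hyx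
  lia

theorem isPathOn_union_of_detour (hf : IsPathSeq r f n) (hi : i < n) {d e : V} {M : Finset V}
    (hM : IsPathOn r d e M) (hdisj : Disjoint ((Icc 0 n).image f) M) (hd : r (f i) d)
    (he : r e (f (i + 1))) : IsPathOn r (f 0) (f n) ((Icc 0 n).image f ∪ M) := by
  have hsplit : Icc 0 n = Icc 0 i ∪ Icc (i + 1) n := by grind
  rw [hsplit, image_union, disjoint_union_left] at hdisj
  rw [hsplit, image_union, union_right_comm]
  refine ((hf.isPathOn_image_Icc i.zero_le hi.le).append hd hM hdisj.1).append he
    (hf.isPathOn_image_Icc hi le_rfl) (disjoint_union_left.2 ⟨?_, hdisj.2.symm⟩)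
  exact hf.disjoint_image_Icc hi.le le_rfl i.lt_succ_self

-- The new path is `f 0 … f i`, then `M`, then `f j … f (i + 1)` backwards, then `f (j + 1) … f n`.
theorem isPathOn_union_of_rotation (hf : IsPathSeq r f n) (hr : ∀ x y, r x y → r y x)
    (hij : i < j) (hj : j < n) {d e : V} {M : Finset V} (hM : IsPathOn r d e M)
    (hdisj : Disjoint ((Icc 0 n).image f) M) (hd : r (f i) d) (he : r e (f j))
    (hrot : r (f (i + 1)) (f (j + 1))) :
    IsPathOn r (f 0) (f n) ((Icc 0 n).image f ∪ M) := by
  have hsplit : Icc 0 n = Icc 0 i ∪ Icc (i + 1) j ∪ Icc (j + 1) n := by grind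
  have h01 := hf.disjoint_image_Icc (i := 0) (hij.trans hj).le hj.le i.lt_succ_self
  have h02 := hf.disjoint_image_Icc (i := 0) (hij.trans hj).le le_rfl (hij.trans j.lt_succ_self)
  have h12 := hf.disjoint_image_Icc (i := i + 1) hj.le le_rfl j.lt_succ_self
  rw [hsplit, image_union, image_union, disjoint_union_left, disjoint_union_left] at hdisj
  have hpath := (((hf.isPathOn_image_Icc i.zero_le (hij.trans hj).le).append hd hM
    hdisj.1.1).append he ((hf.isPathOn_image_Icc hij hj.le).reverse hr)
    (disjoint_union_left.2 ⟨h01, hdisj.1.2.symm⟩)).append hrot (hf.isPathOn_image_Icc hj le_rfl)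
    (disjoint_union_left.2 ⟨disjoint_union_left.2 ⟨h02, hdisj.2.symm⟩, h12⟩)
  convert hpath using 1
  rw [hsplit, image_union, image_union, union_right_comm, union_right_comm (image f (Icc 0 i))]

-- An edge among these vertices would reroute the path through `D`, by a detour if it meets `v` and
-- by a rotation otherwise.
theorem isIndepSet_insert_image_succ {H : SimpleGraph V} {D : Finset V} {v : V}
    [DecidablePred fun i => ∃ d ∈ D, H.Adj (f i) d]
    (hf : IsPathSeq H.Adj f n) (hD : StrongOn H.Adj (D : Set V))
    (hfD : Disjoint ((Icc 0 n).image f) D)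
    (hmax : ∀ M ⊆ D, M.Nonempty → ¬ IsPathOn H.Adj (f 0) (f n) ((Icc 0 n).image f ∪ M))
    (hv : v ∈ D) :
    H.IsIndepSet (insert v ({i ∈ range n | ∃ d ∈ D, H.Adj (f i) d}.image fun i => f (i + 1)) :
      Finset V) := by
  have no_detour : ∀ i < n, (∃ d ∈ D, H.Adj (f i) d) → ¬ H.Adj v (f (i + 1)) := by
    rintro i hi ⟨d, hd, hid⟩ hvi
    obtain ⟨M, hMD, hM⟩ := hD.exists_isPathOn hd hv
    exact hmax M (coe_subset.1 hMD) ⟨d, hM.left_mem⟩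
      (hf.isPathOn_union_of_detour hi hM (hfD.mono_right (coe_subset.1 hMD)) hid hvi)
  have no_rotation : ∀ i j, i < j → j < n → (∃ d ∈ D, H.Adj (f i) d) →
      (∃ d ∈ D, H.Adj (f j) d) → ¬ H.Adj (f (i + 1)) (f (j + 1)) := by
    rintro i j hij hj ⟨d, hd, hid⟩ ⟨e, he, hje⟩ hadj
    obtain ⟨M, hMD, hM⟩ := hD.exists_isPathOn hd he
    exact hmax M (coe_subset.1 hMD) ⟨d, hM.left_mem⟩
      (hf.isPathOn_union_of_rotation (fun _ _ h => h.symm) hij hj hM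
        (hfD.mono_right (coe_subset.1 hMD)) hid hje.symm hadj)
  rw [coe_insert, coe_image, SimpleGraph.isIndepSet_iff]
  refine Set.Pairwise.insert ?_ ?_
  · rintro _ ⟨i, hi, rfl⟩ _ ⟨j, hj, rfl⟩ hij hadj
    simp only [coe_filter, mem_range, Set.mem_ofPred_eq] at hi hj
    rcases lt_trichotomy i j with h | rfl | h
    · exact no_rotation i j h hj.1 hi.2 hj.2 hadj
    · exact hij rfl
    · exact no_rotation j i h hi.1 hj.2 hi.2 hadj.symm
  · rintro _ ⟨i, hi, rfl⟩ -
    simp only [coe_filter, mem_range, Set.mem_ofPred_eq] at hi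
    exact ⟨no_detour i hi.1 hi.2, fun h => no_detour i hi.1 hi.2 h.symm⟩

theorem card_attachments_le {H : SimpleGraph V} {D : Finset V} {α : ℕ}
    [DecidablePred fun x => ∃ d ∈ D, H.Adj x d]
    (hα : ∀ I ⊆ (Icc 0 n).image f ∪ D, H.IsIndepSet I → #I ≤ α)
    (hf : IsPathSeq H.Adj f n) (hDne : D.Nonempty) (hD : StrongOn H.Adj (D : Set V))
    (hfD : Disjoint ((Icc 0 n).image f) D)
    (hmax : ∀ M ⊆ D, M.Nonempty → ¬ IsPathOn H.Adj (f 0) (f n) ((Icc 0 n).image f ∪ M)) :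
    #{x ∈ (Icc 0 n).image f | ∃ d ∈ D, H.Adj x d} ≤ α := by
  obtain ⟨v, hv⟩ := hDne
  set I := {i ∈ range n | ∃ d ∈ D, H.Adj (f i) d} with hI
  have hmemI : ∀ i ∈ I, i + 1 ∈ Icc 0 n := fun i hi => by
    simp only [hI, mem_filter, mem_range] at hi
    exact mem_Icc.2 ⟨by lia, hi.1⟩
  have hsubset : {x ∈ (Icc 0 n).image f | ∃ d ∈ D, H.Adj x d} ⊆ insert (f n) (I.image f) := by
    grind
  have hcard_succ : #(insert v (I.image fun i => f (i + 1))) = #I + 1 := by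
    rw [card_insert_of_notMem, card_image_of_injOn]
    · intro i hi j hj hij
      have := hf.injOn (mem_Icc.1 (hmemI i hi)).2 (mem_Icc.1 (hmemI j hj)).2 hij
      lia
    · intro h
      obtain ⟨i, hi, rfl⟩ := mem_image.1 h
      exact disjoint_left.1 hfD (mem_image_of_mem f (hmemI i hi)) hv
  calc #{x ∈ (Icc 0 n).image f | ∃ d ∈ D, H.Adj x d}
      ≤ #(insert (f n) (I.image f)) := card_le_card hsubset
    _ ≤ #(I.image f) + 1 := card_insert_le _ _
    _ ≤ #I + 1 := Nat.add_le_add_right card_image_le 1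
    _ = #(insert v (I.image fun i => f (i + 1))) := hcard_succ.symm
    _ ≤ α := hα _ (by grind) (hf.isIndepSet_insert_image_succ hD hfD hmax hv)

theorem exists_forall_not_adj {H : SimpleGraph V} {D : Finset V} (hf : IsPathSeq H.Adj f n)
    (hn : 0 < n) (hD : StrongOn H.Adj (D : Set V)) (hfD : Disjoint ((Icc 0 n).image f) D)
    (hmax : ∀ M ⊆ D, M.Nonempty → ¬ IsPathOn H.Adj (f 0) (f n) ((Icc 0 n).image f ∪ M)) :
    ∃ x ∈ (Icc 0 n).image f, ∀ d ∈ D, ¬ H.Adj x d := by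
  by_contra! hall
  obtain ⟨d, hd, h0d⟩ := hall (f 0) (mem_image_of_mem f (by simp))
  obtain ⟨e, he, h1e⟩ := hall (f 1) (mem_image_of_mem f (mem_Icc.2 ⟨zero_le_one, hn⟩))
  obtain ⟨M, hMD, hM⟩ := hD.exists_isPathOn hd he
  exact hmax M (coe_subset.1 hMD) ⟨d, hM.left_mem⟩
    (hf.isPathOn_union_of_detour hn hM (hfD.mono_right (coe_subset.1 hMD)) h0d h1e.symm)

theorem exists_isPathOn_union {H : SimpleGraph V} {A : Finset V} {α : ℕ}
    (hα : ∀ I ⊆ A, H.IsIndepSet I → #I ≤ α)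
    (hA : ∀ S : Finset V, #S ≤ α → StrongOn H.Adj (A \ S : Set V))
    (hf : IsPathSeq H.Adj f n) (hn : 0 < n) (hfA : (Icc 0 n).image f ⊂ A) :
    ∃ M ⊆ A \ (Icc 0 n).image f, M.Nonempty ∧
      IsPathOn H.Adj (f 0) (f n) ((Icc 0 n).image f ∪ M) := by
  classical
  obtain ⟨D, hDA, hDne, hD, hDclosed⟩ :=
    exists_terminal_strongOn (r := H.Adj) (sdiff_nonempty.2 hfA.not_subset)
  have hfD : Disjoint ((Icc 0 n).image f) D := disjoint_sdiff.mono_right hDA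
  by_contra! hmaxA
  have hmax : ∀ M ⊆ D, M.Nonempty → ¬ IsPathOn H.Adj (f 0) (f n) ((Icc 0 n).image f ∪ M) :=
    fun M hM => hmaxA M (hM.trans hDA)
  set N := {x ∈ (Icc 0 n).image f | ∃ d ∈ D, H.Adj x d}
  have hNcard : #N ≤ α := hf.card_attachments_le
    (fun I hI => hα I (hI.trans (union_subset hfA.subset (hDA.trans sdiff_subset))))
    hDne hD hfD hmax
  obtain ⟨x, hx, hxD⟩ := hf.exists_forall_not_adj hn hD hfD hmax
  have hxN : x ∉ N := fun h => by
    obtain ⟨d, hd, hxd⟩ := (mem_filter.1 h).2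
    exact hxD d hd hxd
  have hDN : Disjoint D N := hfD.symm.mono_right (filter_subset _ _)
  obtain ⟨d, hd, y, ⟨⟨hyA, hyN⟩, hyD⟩, hdy⟩ := strongOn_iff_exists_rel.1 (hA N hNcard) D
    (fun d hd => ⟨sdiff_subset (hDA hd), disjoint_left.1 hDN hd⟩) hDne
    ⟨x, ⟨hfA.subset hx, hxN⟩, disjoint_left.1 hfD hx⟩
  refine hyD (hDclosed d hd y (mem_sdiff.2 ⟨hyA, fun hyf => hyN ?_⟩) hdy)
  exact mem_filter.2 ⟨hyf, d, hd, hdy.symm⟩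

end IsPathSeq

/-- The Chvátal–Erdős theorem for Hamilton paths with prescribed ends. -/
theorem isPathOn_of_strongOn_sdiff {H : SimpleGraph V} {A : Finset V} {α : ℕ}
    (hα : ∀ I ⊆ A, H.IsIndepSet I → #I ≤ α)
    (hA : ∀ S : Finset V, #S ≤ α → StrongOn H.Adj (A \ S : Set V))
    {a b : V} (ha : a ∈ A) (hb : b ∈ A) (hab : a ≠ b) : IsPathOn H.Adj a b A := by
  classical
  have hAstrong : StrongOn H.Adj (A : Set V) := by simpa using hA ∅ (by simp)
  obtain ⟨P₀, hP₀A, hP₀⟩ := hAstrong.exists_isPathOn ha hb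
  obtain ⟨P, hPmem, hPmax⟩ := {P ∈ A.powerset | IsPathOn H.Adj a b P}.exists_maximal
    ⟨P₀, mem_filter.2 ⟨mem_powerset.2 (coe_subset.1 hP₀A), hP₀⟩⟩
  simp only [mem_filter, mem_powerset] at hPmem hPmax
  obtain ⟨hPA, hP⟩ := hPmem
  obtain rfl | hPA' := hPA.eq_or_ssubset
  · exact hP
  obtain ⟨f, n, hf, rfl, rfl, rfl⟩ := hP.exists_isPathSeq
  have hn : 0 < n := Nat.pos_of_ne_zero fun hn => hab (by rw [hn])
  obtain ⟨M, hMA, ⟨x, hx⟩, hM⟩ := hf.exists_isPathOn_union hα hA hn hPA'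
  have hxf := hPmax ⟨union_subset hPA (hMA.trans sdiff_subset), hM⟩ subset_union_left
    (mem_union_right _ hx)
  exact absurd hxf (mem_sdiff.1 (hMA hx)).2

end ChvatalErdos

section Partition

variable {V : Type*} [DecidableEq V] {A B W : Finset V}

theorem exists_finpartition_union (P : Finpartition A) (Q : Finpartition B) (hAB : Disjoint A B) :
    ∃ R : Finpartition (A ∪ B),
      R.parts = P.parts ∪ Q.parts ∧ #R.parts = #P.parts + #Q.parts := by
  have hPQ : ∀ s ∈ P.parts, ∀ t ∈ Q.parts, Disjoint s t :=
    fun s hs t ht => hAB.mono (P.le hs) (Q.le ht)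
  refine ⟨⟨P.parts ∪ Q.parts, ?_, ?_, ?_⟩, rfl, card_union_of_disjoint ?_⟩
  · rw [supIndep_iff_pairwiseDisjoint, coe_union]
    exact P.disjoint.union Q.disjoint fun s hs t ht _ => hPQ s hs t ht
  · rw [sup_union, P.sup_parts, Q.sup_parts, sup_eq_union]
  · simp
  · refine disjoint_left.2 fun s hs hs' => P.ne_empty hs ?_
    exact disjoint_self_iff_empty s |>.1 (hPQ s hs s hs')

theorem exists_mem_parts_ne {r : V → V → Prop} (P : Finpartition W) {a b : Finset V → V}
    (hpath : ∀ Q ∈ P.parts, IsPathOn r (a Q) (b Q) Q) (hP : #P.parts < #W) :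
    ∃ Q ∈ P.parts, a Q ≠ b Q := by
  by_contra! hall
  have hone : ∀ Q ∈ P.parts, #Q = 1 := fun Q hQ => by
    have := hpath Q hQ
    rw [← hall Q hQ] at this
    rw [this.eq_singleton, card_singleton]
  have := P.sum_card_parts
  rw [sum_congr rfl hone, sum_const, smul_eq_mul, mul_one] at this
  exact hP.ne this

theorem exists_finpartition_isPathOn (H : SimpleGraph V) (W : Finset V) :
    ∃ P : Finpartition W, (∀ A ∈ P.parts, ∃ a b, IsPathOn H.Adj a b A) ∧
      ∃ I ⊆ W, H.IsIndepSet I ∧ #I = #P.parts := by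
  classical
  induction W using Finset.strongInduction with
  | H W ih =>
  obtain rfl | ⟨w, hw⟩ := W.eq_empty_or_nonempty
  · exact ⟨Finpartition.empty _, by simp [Finpartition.empty], ∅, by simp [Finpartition.empty]⟩
  obtain ⟨A, hAmem, hAmax⟩ := {A ∈ W.powerset | ∃ a b, IsPathOn H.Adj a b A}.exists_maximal
    ⟨{w}, by simpa using ⟨hw, w, w, .singleton w⟩⟩
  simp only [mem_filter, mem_powerset] at hAmem hAmax
  obtain ⟨hAW, a, b, hA⟩ := hAmem
  have hsub : W \ A ⊂ W := sdiff_ssubset hAW ⟨a, hA.left_mem⟩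
  obtain ⟨P, hP, I, hI, hIindep, hIcard⟩ := ih (W \ A) hsub
  have hnadj : ∀ x ∈ W \ A, ¬ H.Adj x a := fun x hx hxa =>
    (mem_sdiff.1 hx).2 <| hAmax
      ⟨insert_subset (mem_sdiff.1 hx).1 hAW, x, b, .cons hxa (mem_sdiff.1 hx).2 hA⟩
      (subset_insert x A) (mem_insert_self x A)
  refine ⟨P.extend (b := A) (ne_empty_of_mem hA.left_mem) sdiff_disjoint
    (sdiff_union_of_subset hAW), ?_, insert a I, ?_, ?_, ?_⟩
  · intro B hB
    obtain rfl | hB := mem_insert.1 hB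
    exacts [⟨a, b, hA⟩, hP B hB]
  · exact insert_subset (hAW hA.left_mem) (hI.trans hsub.subset)
  · rw [coe_insert]
    exact hIindep.insert fun x hx _ => ⟨fun h => hnadj x (hI hx) h.symm, hnadj x (hI hx)⟩
  · rw [card_insert_of_notMem fun ha => (mem_sdiff.1 (hI ha)).2 hA.left_mem, hIcard,
      Finpartition.card_extend]

theorem exists_finpartition_strongOn_sdiff {H : SimpleGraph V} (c : ℕ) (hA : A.Nonempty) :
    ∃ C ⊆ A, ∃ P : Finpartition C,
      (∀ K ∈ P.parts, ∀ S : Finset V, #S ≤ c → StrongOn H.Adj (K \ S : Set V)) ∧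
      #(A \ C) + c ≤ c * #P.parts ∧ ∃ I ⊆ A, H.IsIndepSet I ∧ #I = #P.parts := by
  induction A using Finset.strongInduction with
  | H A ih =>
  by_cases hrobust : ∀ S : Finset V, #S ≤ c → StrongOn H.Adj (A \ S : Set V)
  · obtain ⟨x, hx⟩ := hA
    refine ⟨A, Subset.rfl, .indiscrete (ne_empty_of_mem hx), ?_, ?_,
      {x}, singleton_subset_iff.2 hx, ?_, ?_⟩
    · simpa using hrobust
    · simp
    · simp
    · simp
  push Not at hrobust
  obtain ⟨S, hS, hcut⟩ := hrobust
  rw [← coe_sdiff] at hcut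
  obtain ⟨X, Y, hX, hY, hXY, hXYA, hnadj⟩ := exists_cut_of_not_strongOn hcut
  have hXYsub : X ∪ Y ⊆ A := hXYA.trans_subset sdiff_subset
  have hXA : X ⊂ A := ssubset_of_subset_of_ne (union_subset_left hXYsub) fun h =>
    hY.ne_empty (disjoint_self_iff_empty Y |>.1 (hXY.mono_left (h ▸ union_subset_right hXYsub)))
  have hYA : Y ⊂ A := ssubset_of_subset_of_ne (union_subset_right hXYsub) fun h =>
    hX.ne_empty (disjoint_self_iff_empty X |>.1 (hXY.mono_right (h ▸ union_subset_left hXYsub)))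
  obtain ⟨CX, hCX, PX, hPX, hcardX, IX, hIX, hIXindep, hIXcard⟩ := ih X hXA hX
  obtain ⟨CY, hCY, PY, hPY, hcardY, IY, hIY, hIYindep, hIYcard⟩ := ih Y hYA hY
  obtain ⟨P, hPparts, hPcard⟩ := exists_finpartition_union PX PY (hXY.mono hCX hCY)
  refine ⟨CX ∪ CY, union_subset_union hCX hCY |>.trans (union_subset hXA.subset hYA.subset), P,
    ?_, ?_, IX ∪ IY, ?_, ?_, ?_⟩
  · intro K hK
    rw [hPparts, mem_union] at hK
    exact hK.elim (hPX K) (hPY K)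
  · have hrest : A \ (CX ∪ CY) ⊆ S ∪ (X \ CX ∪ Y \ CY) := fun x hx => by
      have hxXY : x ∈ X ∪ Y ↔ x ∈ A \ S := by rw [hXYA]
      simp only [mem_sdiff, mem_union] at hx hxXY ⊢
      tauto
    have := (card_le_card hrest).trans (card_union_le _ _)
    have := card_union_le (X \ CX) (Y \ CY)
    rw [hPcard, mul_add]
    lia
  · exact union_subset_union hIX hIY |>.trans (union_subset hXA.subset hYA.subset)
  · rw [coe_union]
    have : Std.Symm fun x y => ¬ H.Adj x y := ⟨fun x y h h' => h h'.symm⟩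
    refine Set.pairwise_union_of_symm.2
      ⟨hIXindep, hIYindep, fun x hx y hy _ => hnadj x (hIX hx) y (hIY hy)⟩
  · rw [card_union_of_disjoint (hXY.mono hIX hIY), hPcard, hIXcard, hIYcard]

/-- `Q` is spanned by an `r`-path from `a` to `b`, even after the deletion of up to `d` vertices
outside `core`. -/
structure IsRobustPathOn {V : Type*} [DecidableEq V] (r : V → V → Prop) (d : ℕ) (a b : V)
    (core Q : Finset V) : Prop where
  left_mem : a ∈ core
  right_mem : b ∈ core
  core_subset : core ⊆ Q
  isPathOn_sdiff : ∀ D, Disjoint D core → #D ≤ d → IsPathOn r a b (Q \ D)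

theorem IsRobustPathOn.mono {r s : V → V → Prop} {d : ℕ} {a b : V} {core Q : Finset V}
    (hrs : ∀ x y, r x y → s x y) (h : IsRobustPathOn r d a b core Q) :
    IsRobustPathOn s d a b core Q where
  __ := h
  isPathOn_sdiff D hD hDcard := (h.isPathOn_sdiff D hD hDcard).mono hrs

theorem IsPathOn.isRobustPathOn {r : V → V → Prop} {a b : V} (h : IsPathOn r a b A) (d : ℕ) :
    IsRobustPathOn r d a b A A where
  left_mem := h.left_mem
  right_mem := h.right_mem
  core_subset := Subset.rfl
  isPathOn_sdiff D hD _ := by rwa [sdiff_eq_self_of_disjoint hD.symm]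

theorem exists_isRobustPathOn {H : SimpleGraph V} {α d : ℕ}
    (hα : ∀ I ⊆ A, H.IsIndepSet I → #I ≤ α)
    (hA : ∀ S : Finset V, #S ≤ d + α → StrongOn H.Adj (A \ S : Set V)) (hne : A.Nonempty) :
    ∃ a b core, #core ≤ 2 ∧ IsRobustPathOn H.Adj d a b core A := by
  obtain ⟨a, rfl⟩ | ⟨a, ha, b, hb, hab⟩ := hne.exists_eq_singleton_or_nontrivial
  · exact ⟨a, a, {a}, by simp, (IsPathOn.singleton a).isRobustPathOn d⟩
  refine ⟨a, b, {a, b}, card_le_two, by simp, by simp, insert_subset ha (by simpa using hb),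
    fun D hD hDcard => ?_⟩
  simp only [disjoint_insert_right, disjoint_singleton_right] at hD
  refine isPathOn_of_strongOn_sdiff (α := α) (fun I hI => hα I (hI.trans sdiff_subset))
    (fun S hS => ?_) (mem_sdiff.2 ⟨ha, hD.1⟩) (mem_sdiff.2 ⟨hb, hD.2⟩) hab
  rw [coe_sdiff, Set.sdiff_sdiff, ← coe_union]
  exact hA (D ∪ S) ((card_union_le _ _).trans (Nat.add_le_add hDcard hS))

theorem exists_robust_finpartition {H : SimpleGraph V} {α : ℕ} (d : ℕ) (hW : W.Nonempty)
    (hα : ∀ I ⊆ W, H.IsIndepSet I → #I ≤ α) :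
    ∃ P : Finpartition W, #P.parts ≤ 2 * α ∧
      ∃ (a b : Finset V → V) (core : Finset V → Finset V),
        (∀ Q ∈ P.parts, IsRobustPathOn H.Adj d (a Q) (b Q) (core Q) Q) ∧
        #(P.parts.biUnion core) + (d + α) ≤ (d + α) * α + 2 * α := by
  have : Nonempty V := ⟨hW.choose⟩
  obtain ⟨C, hCW, P, hP, hcard, I, hIW, hI, hIcard⟩ :=
    exists_finpartition_strongOn_sdiff (H := H) (d + α) hW
  obtain ⟨P', hP', I', hI'W, hI', hI'card⟩ := exists_finpartition_isPathOn H (W \ C)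
  obtain ⟨R, hRparts, hRcard⟩ := exists_finpartition_union P P' disjoint_sdiff
  have hPcard : #P.parts ≤ α := hIcard ▸ hα I hIW hI
  have hP'card : #P'.parts ≤ α := hI'card ▸ hα I' (hI'W.trans sdiff_subset) hI'
  have hparts : ∀ Q ∈ R.parts, ∃ a b core,
      IsRobustPathOn H.Adj d a b core Q ∧ (Q ∈ P.parts → #core ≤ 2) := by
    intro Q hQ
    by_cases hQP : Q ∈ P.parts
    · obtain ⟨a, b, core, hcore, hQ⟩ := exists_isRobustPathOn
        (fun I hI => hα I (hI.trans ((P.le hQP).trans hCW))) (hP Q hQP)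
        (P.nonempty_of_mem_parts hQP)
      exact ⟨a, b, core, hQ, fun _ => hcore⟩
    · obtain ⟨a, b, hab⟩ := hP' Q ((mem_union.1 (hRparts ▸ hQ)).resolve_left hQP)
      exact ⟨a, b, Q, hab.isRobustPathOn d, fun h => absurd h hQP⟩
  choose! a b core hrobust hcore using hparts
  refine ⟨R.copy (union_sdiff_of_subset hCW), ?_, a, b, core, hrobust, ?_⟩
  · rw [Finpartition.copy_parts]
    lia
  have hP_core : #(P.parts.biUnion core) ≤ #P.parts * 2 :=
    card_biUnion_le_card_mul _ _ _ fun Q hQ => hcore Q (hRparts ▸ mem_union_left _ hQ) hQ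
  have hP'_core : P'.parts.biUnion core ⊆ W \ C := biUnion_subset.2 fun Q hQ =>
    (hrobust Q (hRparts ▸ mem_union_right _ hQ)).core_subset.trans (P'.le hQ)
  have hmul : (d + α) * #P.parts ≤ (d + α) * α := Nat.mul_le_mul_left _ hPcard
  calc #(R.parts.biUnion core) + (d + α)
      ≤ #(P.parts.biUnion core) + #(P'.parts.biUnion core) + (d + α) := by
        rw [hRparts, union_biUnion]
        exact Nat.add_le_add_right (card_union_le _ _) _
    _ ≤ 2 * α + (#(W \ C) + (d + α)) := by
        have := card_le_card hP'_core
        lia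
    _ ≤ (d + α) * α + 2 * α := by lia

end Partition

section Linking

variable {V : Type*} [DecidableEq V] {r : V → V → Prop} {k q : ℕ}

/-- Any two distinct vertices `x`, `y` of a set `S` of at most `k` vertices are joined by an
`r`-path from `x` to `y` with at most `q` inner vertices, none of which is in `S`. -/
def HasShortLinks {V : Type*} [DecidableEq V] (r : V → V → Prop) (k q : ℕ) : Prop :=
  ∀ (S : Finset V) (x y : V), x ∈ S → y ∈ S → x ≠ y → #S ≤ k →
    ∃ D, Disjoint D S ∧ #D ≤ q ∧ IsPathOn r x y (insert x (insert y D))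

theorem hasShortLinks_of_strongOn_compl {α : ℕ}
    (hα : ∀ I : Finset V, (twoCycleGraph r).IsIndepSet I → #I ≤ α)
    (hk : ∀ S : Finset V, #S < k → StrongOn r (S : Set V)ᶜ) :
    HasShortLinks r k (2 * α - 2) := by
  intro S x y hx _ hxy hS
  have hcard : #((S.erase x).erase y) < k :=
    (card_le_card (erase_subset _ _)).trans_lt ((card_erase_lt_of_mem hx).trans_le hS)
  obtain ⟨M, hMS, hM, hMcard⟩ := (hk _ hcard).exists_isPathOn_card_le hα
    (show x ∈ _ by simp) (show y ∈ _ by simp)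
  have hyM : y ∈ M.erase x := mem_erase.2 ⟨hxy.symm, hM.right_mem⟩
  refine ⟨(M.erase x).erase y, disjoint_left.2 fun v hv hvS => ?_, ?_, ?_⟩
  · simp only [mem_erase] at hv
    exact hMS hv.2.2 (by simp [hv.1, hv.2.1, hvS])
  · rw [card_erase_of_mem hyM, card_erase_of_mem hM.left_mem]
    lia
  · rwa [insert_erase hyM, insert_erase hM.left_mem]

theorem IsPathOn.trans_sdiff {a u z : V} {B D : Finset V}
    (h : IsPathOn r u a (insert u (insert a D))) (h' : IsPathOn r a z (B \ D)) (hu : u ∉ B) :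
    IsPathOn r u z (insert u (D ∪ B)) := by
  have ha := h'.left_mem
  convert h.trans h' fun x hx => ?_ using 1
  · ext x
    simp only [mem_insert, mem_union, mem_sdiff] at ha ⊢
    by_cases hxa : x = a
    · simp [hxa, ha]
    · tauto
  · simp only [mem_inter, mem_insert, mem_sdiff, mem_singleton] at hx ⊢
    rcases hx with ⟨rfl | hxa | hxD, hxB, hxD'⟩
    exacts [absurd hxB hu, hxa, absurd hxD hxD']

theorem IsPathOn.trans_link {a b u z : V} {A B D₁ D₂ : Finset V}
    (h : IsPathOn r u a (insert u (insert a D₁))) (hA : IsPathOn r a b (A \ (D₁ ∪ D₂)))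
    (hB : IsPathOn r b z (insert b (insert z (D₂ ∪ B \ D₁)))) (hD : Disjoint D₁ D₂)
    (hAB : Disjoint A B) (hzA : z ∉ A) (hzD : z ∉ D₁) (hu : u ∉ insert z (D₂ ∪ (A ∪ B))) :
    IsPathOn r u z (insert u (insert z (D₁ ∪ D₂ ∪ (A ∪ B)))) := by
  have hbA := hA.right_mem
  have htail := hA.trans hB fun x hx => by
    have hxB : x ∈ A → x ∉ B := fun hxA => disjoint_left.1 hAB hxA
    simp only [mem_inter, mem_sdiff, mem_insert, mem_union, mem_singleton] at hx ⊢
    grind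
  have hset : A \ (D₁ ∪ D₂) ∪ insert b (insert z (D₂ ∪ B \ D₁)) =
      insert z (D₂ ∪ (A ∪ B)) \ D₁ := by
    ext x
    have hxD : x ∈ D₁ → x ∉ D₂ := fun hxD₁ => disjoint_left.1 hD hxD₁
    simp only [mem_insert, mem_union, mem_sdiff] at hbA ⊢
    grind
  rw [hset] at htail
  rw [union_assoc, ← union_insert]
  exact h.trans_sdiff htail hu

-- The links may run through the sets `Q i`, whose spanning paths must therefore avoid `D`.
theorem HasShortLinks.exists_isPathOn_biUnion {ι : Type*} (h : HasShortLinks r k q)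
    {a b : ι → V} {z : V} (T : Finset ι) {Q : ι → Finset V} {S : Finset V} {u : V}
    (hQ : (T : Set ι).PairwiseDisjoint Q) (ha : ∀ i ∈ T, a i ∈ Q i ∩ S)
    (hb : ∀ i ∈ T, b i ∈ Q i ∩ S) (hu : u ∈ S) (hz : z ∈ S) (huz : u ≠ z)
    (huQ : ∀ i ∈ T, u ∉ Q i) (hzQ : ∀ i ∈ T, z ∉ Q i) (hk : #S + #T * q ≤ k) :
    ∃ D, Disjoint D S ∧ #D ≤ (#T + 1) * q ∧
      ((∀ i ∈ T, IsPathOn r (a i) (b i) (Q i \ D)) →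
        IsPathOn r u z (insert u (insert z (D ∪ T.biUnion Q)))) := by
  classical
  induction T using Finset.induction_on generalizing Q S u with
  | empty =>
    obtain ⟨D, hDS, hD, hpath⟩ := h S u z hu hz huz (by simpa using hk)
    exact ⟨D, hDS, by simpa using hD, fun _ => by simpa using hpath⟩
  | insert i T hi ih =>
    simp only [forall_mem_insert, mem_inter] at ha hb huQ hzQ
    rw [card_insert_of_notMem hi, add_mul, one_mul] at hk
    have hQi : ∀ j ∈ T, Disjoint (Q i) (Q j) := fun j hj =>
      hQ (by simp) (by simp [hj]) (by rintro rfl; exact hi hj)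
    obtain ⟨D₁, hD₁S, hD₁, hlink⟩ := h S u (a i) hu ha.1.2 (by grind) (by lia)
    have hmem : ∀ v j, v ∈ Q j → v ∈ S → v ∈ (Q j \ D₁) ∩ (S ∪ D₁) := fun v j hv hvS => by
      have := disjoint_right.1 hD₁S hvS
      simp [hv, hvS, this]
    obtain ⟨D₂, hD₂S, hD₂, hrest⟩ := ih (Q := fun j => Q j \ D₁) (S := S ∪ D₁) (u := b i)
      (fun j hj l hl hjl => (hQ (by simp_all) (by simp_all) hjl).mono sdiff_subset sdiff_subset)
      (fun j hj => hmem _ _ (ha.2 j hj).1 (ha.2 j hj).2)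
      (fun j hj => hmem _ _ (hb.2 j hj).1 (hb.2 j hj).2)
      (mem_union_left _ hb.1.2) (mem_union_left _ hz) (by grind)
      (fun j hj h => disjoint_left.1 (hQi j hj) hb.1.1 (sdiff_subset h))
      (fun j hj h => hzQ.2 j hj (sdiff_subset h))
      (by have := card_union_le S D₁; lia)
    rw [disjoint_union_right] at hD₂S
    refine ⟨D₁ ∪ D₂, disjoint_union_left.2 ⟨hD₁S, hD₂S.1⟩, ?_, fun hpaths => ?_⟩
    · have := card_union_le D₁ D₂
      rw [card_insert_of_notMem hi]
      lia
    have hsdiff : (T.biUnion fun j => Q j \ D₁) = T.biUnion Q \ D₁ := by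
      ext x
      simp only [mem_biUnion, mem_sdiff, ← and_assoc, exists_and_right]
    rw [biUnion_insert]
    refine hlink.trans_link (hpaths i (mem_insert_self i T)) (hsdiff ▸ hrest fun j hj => ?_)
      hD₂S.2.symm ((disjoint_biUnion_right _ _ _).2 hQi) hzQ.1 (disjoint_right.1 hD₁S hz) ?_
    · rw [_root_.sdiff_sdiff_left, sup_eq_union]
      exact hpaths j (mem_insert_of_mem hj)
    · have := disjoint_right.1 hD₂S.1 hu
      simpa only [mem_insert, mem_union, mem_biUnion, huz, this, huQ.1, false_or, not_exists,
        not_and] using huQ.2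

end Linking

section HamCycle

variable {V : Type*} [Fintype V] [DecidableEq V] {r : V → V → Prop} {a b : V}

theorem IsPathOn.exists_isHamCycle (h : IsPathOn r a b univ) (hba : r b a) :
    ∃ f : ZMod (Fintype.card V) → V, IsHamCycle r f := by
  obtain ⟨f, n, hf, rfl, rfl, himage⟩ := h.exists_isPathSeq
  have hcard : Fintype.card V = n + 1 := by
    rw [← card_univ, ← himage, card_image_of_injOn (hf.injOn.mono fun i hi => (mem_Icc.1 hi).2),
      Nat.card_Icc, Nat.sub_zero]
  have : NeZero (Fintype.card V) := ⟨by lia⟩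
  have hle (i : ZMod (Fintype.card V)) : i.val ≤ n := Nat.lt_succ_iff.1 (i.val_lt.trans_eq hcard)
  refine ⟨fun i => f i.val, ?_, fun i => ?_⟩
  · rw [Fintype.bijective_iff_injective_and_card, ZMod.card]
    exact ⟨fun i j hij => ZMod.val_injective _ (hf.injOn (hle i) (hle j) hij), rfl⟩
  simp only [ZMod.val_add, ZMod.val_one_eq_one_mod, Nat.add_mod_mod, hcard]
  obtain hi | hi := (hle i).lt_or_eq
  · rw [Nat.mod_eq_of_lt (Nat.succ_lt_succ hi)]
    exact hf.rel _ hi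
  · rw [hi, Nat.mod_self]
    exact hba

theorem IsPathOn.exists_isHamCycle_of_union {A B : Finset V} (hA : IsPathOn r a b A)
    (hB : IsPathOn r b a B) (hab : a ≠ b) (hAB : A ∩ B ⊆ {a, b}) (huniv : A ∪ B = univ) :
    ∃ f : ZMod (Fintype.card V) → V, IsHamCycle r f := by
  cases hA with
  | singleton => exact absurd rfl hab
  | @cons _ c _ A hac ha hA =>
    have hpath := hA.trans hB fun x hx => by
      have := hAB (inter_subset_inter_right (subset_insert a A) hx)
      grind
    rw [← insert_eq_of_mem (mem_union_right A hB.right_mem), ← insert_union, huniv] at hpath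
    exact hpath.exists_isHamCycle hac

theorem HasShortLinks.exists_isHamCycle {k q d : ℕ} (h : HasShortLinks r k q)
    (P : Finpartition (univ : Finset V)) {a b : Finset V → V} {core : Finset V → Finset V}
    (hrobust : ∀ Q ∈ P.parts, IsRobustPathOn r d (a Q) (b Q) (core Q) Q)
    (hP : #P.parts < Fintype.card V) (hd : #P.parts * q ≤ d)
    (hk : #(P.parts.biUnion core) + #P.parts * q ≤ k) :
    ∃ f : ZMod (Fintype.card V) → V, IsHamCycle r f := by
  have hcore : ∀ Q ∈ P.parts, core Q ⊆ P.parts.biUnion core := fun Q hQ =>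
    subset_biUnion_of_mem core hQ
  have hends : ∀ Q ∈ P.parts, a Q ∈ Q ∩ P.parts.biUnion core ∧ b Q ∈ Q ∩ P.parts.biUnion core :=
    fun Q hQ => by
      have hQcore := subset_inter (hrobust Q hQ).core_subset (hcore Q hQ)
      exact ⟨hQcore (hrobust Q hQ).left_mem, hQcore (hrobust Q hQ).right_mem⟩
  obtain ⟨Q₀, hQ₀, hab⟩ := exists_mem_parts_ne P (fun Q hQ => by
    simpa using (hrobust Q hQ).isPathOn_sdiff ∅ (by simp) (by simp)) hP
  obtain ⟨⟨ha, haS⟩, hb, hbS⟩ := (hends Q₀ hQ₀).imp mem_inter.1 mem_inter.1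
  set T := P.parts.erase Q₀
  have hcard : #T + 1 = #P.parts := card_erase_add_one hQ₀
  have hTP : T ⊆ P.parts := erase_subset _ _
  have hdisj : ∀ Q ∈ T, Disjoint Q₀ Q := fun Q hQ =>
    P.disjoint hQ₀ (hTP hQ) (ne_of_mem_erase hQ).symm
  obtain ⟨D, hDcore, hDcard, hlink⟩ := h.exists_isPathOn_biUnion T (Q := id)
    (P.disjoint.subset (coe_subset.2 hTP)) (fun Q hQ => (hends Q (hTP hQ)).1)
    (fun Q hQ => (hends Q (hTP hQ)).2) hbS haS hab.symm
    (fun Q hQ => disjoint_left.1 (hdisj Q hQ) hb) (fun Q hQ => disjoint_left.1 (hdisj Q hQ) ha)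
    (hk.trans' (Nat.add_le_add_left (Nat.mul_le_mul_right q (card_le_card hTP)) _))
  have hpath : ∀ Q ∈ P.parts, IsPathOn r (a Q) (b Q) (Q \ D) := fun Q hQ =>
    (hrobust Q hQ).isPathOn_sdiff D (hDcore.mono_right (hcore Q hQ))
      (hDcard.trans (by rwa [hcard]))
  refine (hpath Q₀ hQ₀).exists_isHamCycle_of_union (hlink fun Q hQ => hpath Q (hTP hQ)) hab ?_ ?_
  · intro x hx
    simp only [mem_inter, mem_sdiff, mem_insert, mem_union, mem_biUnion, mem_singleton] at hx ⊢
    rcases hx with ⟨⟨hxQ, hxD⟩, hxb | hxa | hxD' | ⟨Q, hQ, hxQ'⟩⟩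
    exacts [.inr hxb, .inl hxa, absurd hxD' hxD, absurd hxQ' (disjoint_left.1 (hdisj Q hQ) hxQ)]
  · have hunion : Q₀ ∪ T.biUnion id = univ := by
      rw [← P.biUnion_parts, ← insert_erase hQ₀, biUnion_insert, id]
    refine eq_univ_of_forall fun x => ?_
    have hx := hunion ▸ mem_univ x
    simp only [mem_union, mem_sdiff, mem_insert] at hx ⊢
    tauto

end HamCycle

section Connectivity

variable {V : Type*} [Fintype V] {G : V → V → Prop}

theorem card_le_alphaTwo (hG : ∀ x, ¬ G x x) {I : Finset V}
    (hI : (twoCycleGraph G).IsIndepSet I) : #I ≤ alphaTwo G := by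
  refine le_csSup ⟨Fintype.card V, ?_⟩
    ⟨I, Set.ncard_coe_finset I, fun x hx y hy h => hI hx hy ?_ ⟨?_, h⟩⟩
  · rintro _ ⟨S, rfl, -⟩
    rw [← Nat.card_eq_fintype_card]
    exact Set.ncard_le_card S
  all_goals
    rintro rfl
    exact hG x h.1

theorem alphaTwo_pos [Nonempty V] (hG : ∀ x, ¬ G x x) : 0 < alphaTwo G := by
  obtain ⟨v⟩ := ‹Nonempty V›
  have := card_le_alphaTwo hG (I := {v}) (by simp)
  rwa [card_singleton] at this

theorem strongOn_compl_of_lt_kappa {S : Finset V} (hS : #S < kappa G) :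
    StrongOn G (S : Set V)ᶜ := by
  by_contra h
  exact Nat.notMem_of_lt_sInf hS ⟨S, Set.ncard_coe_finset S, .inl h⟩

theorem kappa_lt_card [Nonempty V] (G : V → V → Prop) : kappa G < Fintype.card V := by
  obtain ⟨v⟩ := ‹Nonempty V›
  calc kappa G ≤ ({v}ᶜ : Set V).ncard := Nat.sInf_le ⟨{v}ᶜ, rfl, .inr (by simp)⟩
    _ < Fintype.card V := by
      rw [← Nat.card_eq_fintype_card, ← Set.ncard_add_ncard_compl {v}, Set.ncard_singleton]
      lia

theorem nonempty_of_kappa_pos (hG : 0 < kappa G) : Nonempty V := by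
  obtain ⟨_, S, -, hS | hS⟩ := Nat.nonempty_of_pos_sInf hG
  · simp only [StrongOn, not_forall] at hS
    exact ⟨hS.choose⟩
  · exact ⟨(Set.ncard_eq_one.1 hS).choose⟩

end Connectivity

theorem jackson_chvatal_erdos_general {V : Type*} [Fintype V] [Nonempty V] {G : V → V → Prop}
    (hirr : ∀ x, ¬ G x x) (hκ : 4 * alphaTwo G ^ 3 ≤ kappa G) :
    ∃ f : ZMod (Fintype.card V) → V, IsHamCycle G f := by
  classical
  have hα : ∀ I : Finset V, (twoCycleGraph G).IsIndepSet I → #I ≤ alphaTwo G :=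
    fun I hI => card_le_alphaTwo hirr hI
  have hlinks : HasShortLinks G (kappa G) (2 * alphaTwo G - 2) :=
    hasShortLinks_of_strongOn_compl hα fun S hS => strongOn_compl_of_lt_kappa hS
  obtain ⟨P, hP, a, b, core, hrobust, hcore⟩ := exists_robust_finpartition
    (2 * alphaTwo G * (2 * alphaTwo G - 2)) univ_nonempty fun I _ => hα I
  have hlinkcard := Nat.mul_le_mul_right (2 * alphaTwo G - 2) hP
  refine hlinks.exists_isHamCycle P (fun Q hQ => (hrobust Q hQ).mono fun x y h => h.2.1)
    ?_ hlinkcard ?_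
  · have := Nat.le_self_pow three_ne_zero (alphaTwo G)
    have := kappa_lt_card G
    lia
  · have hbound : (2 * alphaTwo G * (2 * alphaTwo G - 2) + alphaTwo G) * alphaTwo G + alphaTwo G
        ≤ 4 * alphaTwo G ^ 3 := by
      obtain ⟨m, hm⟩ := Nat.exists_eq_add_one.2 (alphaTwo_pos hirr)
      rw [hm, show 2 * (m + 1) - 2 = 2 * m by lia]
      nlinarith
    lia

theorem four_mul_pow_three_le_two_pow_mul_factorial_add_two (n : ℕ) :
    4 * n ^ 3 ≤ 2 ^ n * (n + 2).factorial := by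
  induction n with
  | zero => simp
  | succ n ih =>
    rw [pow_succ, Nat.factorial_succ]
    obtain rfl | hn := n.eq_zero_or_pos
    · simp [Nat.factorial]
    calc 4 * (n + 1) ^ 3 ≤ 4 * (2 * n) ^ 3 := by gcongr; lia
      _ = 8 * (4 * n ^ 3) := by ring
      _ ≤ 2 * (n + 3) * (2 ^ n * (n + 2).factorial) := Nat.mul_le_mul (by lia) ih
      _ = _ := by ring

/-- Jackson's theorem: if κ(G) ≥ 2^{α₂(G)} · (α₂(G) + 2)!, then the digraph G has a
Hamilton cycle. -/
theorem jackson_chvatal_erdos (V : Type) [Fintype V] (G : V → V → Prop)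
    (hirr : Irreflexive G)
    (hκ : 2 ^ alphaTwo G * Nat.factorial (alphaTwo G + 2) ≤ kappa G) :
    ∃ f : ZMod (Fintype.card V) → V, IsHamCycle G f := by
  have : Nonempty V := nonempty_of_kappa_pos (hκ.trans_lt' (by positivity))
  exact jackson_chvatal_erdos_general hirr
    ((four_mul_pow_three_le_two_pow_mul_factorial_add_two _).trans hκ)
end

section
/- There exists an integer n₀ such that every digraph G on n ≥ n₀ vertices with minimum semidegree δ⁰(G) ≥ n/2 + n^{5/6} contains every orientation of a Hamilton cycle: for every sequence ε₁, …, εₙ ∈ {+1, −1} there is a cyclic ordering v₁, v₂, …, vₙ of all the vertices of G such that for each i (indices mod n), G contains the edge vᵢvᵢ₊₁ if εᵢ = +1 and the edge vᵢ₊₁vᵢ if εᵢ = −1. -/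
/-- The outdegree of a vertex `x` in the digraph with adjacency relation `G`. -/
noncomputable def outDeg {V : Type*} (G : V → V → Prop) (x : V) : ℕ :=
  Nat.card {y : V // G x y}

/-- The indegree of a vertex `x` in the digraph with adjacency relation `G`. -/
noncomputable def inDeg {V : Type*} (G : V → V → Prop) (x : V) : ℕ :=
  Nat.card {y : V // G y x}

/-!
Lay the cyclic order out as one long interval followed by `m` columns of length `k`, with a single
gap after each of these `m + 1` intervals.

The columns are embedded by random permutations. List the uncovered vertices as `k` rows of `m`;
by a Chernoff bound every vertex has more than half of each row as out- and as in-neighbours. The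
vertex placed in row `i` of column `j` is given by a permutation `πᵢ`. In passing to row `i + 1`,
a perfect matching handles the columns with the less frequent direction, and on the remaining
ones, which form a random set, Hall's theorem corrects it. The correction depends only on the *set*
of vertices occupied by these columns, so `πᵢ ↦ πᵢ₊₁` is injective: every `πᵢ` is uniform, and the
union bound applies to each step.

The long interval is an absorbing path, built greedily, together with `m + 1` spare vertices. Each
spare can replace path vertices (slots) so numerous that among them one fits into any given gap.
Initially the spares sit in the gaps; exchanging each spare with such a slot closes the cycle.
-/

section
open Finset
open scoped Classical

/-! ### Large deviations for random permutations -/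

theorem card_filter_exists_le {ι Ω : Type*} [Fintype ι] [Fintype Ω] (p : ι → Ω → Prop)
    [∀ i, DecidablePred (p i)] {b : ℝ} (hp : ∀ i, (#{ω | p i ω} : ℝ) ≤ b) :
    (#{ω | ∃ i, p i ω} : ℝ) ≤ Fintype.card ι * b :=
  calc (#{ω | ∃ i, p i ω} : ℝ) = #(univ.biUnion fun i => {ω | p i ω}) := by
        congr 2
        ext ω
        simp
    _ ≤ ∑ i, (#{ω | p i ω} : ℝ) := by exact_mod_cast card_biUnion_le
    _ ≤ Fintype.card ι * b := by simpa using sum_le_card_nsmul univ _ b fun i _ => hp i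

theorem exists_forall_not_of_card_mul_lt {ι Ω : Type*} [Fintype ι] [Fintype Ω] (p : ι → Ω → Prop)
    [∀ i, DecidablePred (p i)] {b : ℝ} (hp : ∀ i, (#{ω | p i ω} : ℝ) ≤ b)
    (hb : Fintype.card ι * b < Fintype.card Ω) :
    ∃ ω, ∀ i, ¬ p i ω := by
  have hlt : #{ω | ∃ i, p i ω} < #(univ : Finset Ω) := by
    rw [card_univ]
    exact_mod_cast (card_filter_exists_le p hp).trans_lt hb
  obtain ⟨ω, -, hω⟩ := exists_mem_notMem_of_card_lt_card hlt
  exact ⟨ω, fun i hi => hω (by simpa using ⟨i, hi⟩)⟩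

section Permutations
variable {α : Type*} [Fintype α]

/-- The permutations of `α` that map `A` into `D`: the event that a random injection of `A`
lands in `D`, up to the normalisation by `(card α)!`. -/
noncomputable def permsInto (A D : Finset α) : Finset (Equiv.Perm α) :=
  {e | ∀ a ∈ A, e a ∈ D}

theorem mem_permsInto {A D : Finset α} {e : Equiv.Perm α} :
    e ∈ permsInto A D ↔ ∀ a ∈ A, e a ∈ D := by
  simp [permsInto]

theorem permsInto_insert (a : α) (A D : Finset α) :
    permsInto (insert a A) D = {e ∈ permsInto A D | e a ∈ D} := by
  ext e
  simp [mem_permsInto, and_comm]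

theorem card_permsInto_insert_eq {A : Finset α} {a b : α} (ha : a ∉ A) (hb : b ∉ A)
    (D : Finset α) : #(permsInto (insert a A) D) = #(permsInto (insert b A) D) := by
  refine card_equiv (Equiv.mulRight (Equiv.swap a b)) fun e => ?_
  have hA : ∀ c ∈ A, Equiv.swap a b c = c := fun c hc =>
    Equiv.swap_apply_of_ne_of_ne (ne_of_mem_of_not_mem hc ha) (ne_of_mem_of_not_mem hc hb)
  simp +contextual [mem_permsInto, hA]

theorem card_filter_compl_mem_le {A D : Finset α} {q : ℝ} (hq1 : q ≤ 1)
    (hD : (#D : ℝ) ≤ q * Fintype.card α) {e : Equiv.Perm α} (he : e ∈ permsInto A D) :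
    (#{b ∈ Aᶜ | e b ∈ D} : ℝ) ≤ q * #Aᶜ := by
  have hsub : A ⊆ D.map e.symm.toEmbedding := fun a ha => by
    simpa using mem_permsInto.mp he a ha
  have hfilter : {b ∈ Aᶜ | e b ∈ D} = D.map e.symm.toEmbedding \ A := by
    ext b
    simp [and_comm]
  have hsplit : #{b ∈ Aᶜ | e b ∈ D} + #A = #D := by
    rw [hfilter, card_sdiff_add_card_eq_card hsub, card_map]
  have hcompl : (#Aᶜ : ℝ) + #A = Fintype.card α := by exact_mod_cast card_compl_add_card A
  have hsplit' : (#{b ∈ Aᶜ | e b ∈ D} : ℝ) + #A = #D := by exact_mod_cast hsplit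
  nlinarith [(#A).cast_nonneg (α := ℝ)]

theorem card_permsInto_insert_le {A D : Finset α} {q : ℝ} (hq1 : q ≤ 1)
    (hD : (#D : ℝ) ≤ q * Fintype.card α) {a : α} (ha : a ∉ A) :
    (#(permsInto (insert a A) D) : ℝ) ≤ q * #(permsInto A D) := by
  have hcount : ∑ b ∈ Aᶜ, #(permsInto (insert b A) D) =
      ∑ e ∈ permsInto A D, #{b ∈ Aᶜ | e b ∈ D} := by
    simp only [permsInto_insert, card_filter]
    exact sum_comm
  rw [sum_congr rfl fun b hb => card_permsInto_insert_eq (mem_compl.mp hb) ha D, sum_const,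
    smul_eq_mul] at hcount
  have hpos : (0 : ℝ) < #Aᶜ := by exact_mod_cast card_pos.mpr ⟨a, mem_compl.mpr ha⟩
  refine le_of_mul_le_mul_left ?_ hpos
  calc (#Aᶜ : ℝ) * #(permsInto (insert a A) D)
      = ∑ e ∈ permsInto A D, (#{b ∈ Aᶜ | e b ∈ D} : ℝ) := by exact_mod_cast hcount
    _ ≤ ∑ _e ∈ permsInto A D, q * #Aᶜ :=
        sum_le_sum fun e he => card_filter_compl_mem_le hq1 hD he
    _ = #Aᶜ * (q * #(permsInto A D)) := by rw [sum_const, nsmul_eq_mul]; ring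

theorem card_permsInto_le {D : Finset α} {q : ℝ} (hq0 : 0 ≤ q) (hq1 : q ≤ 1)
    (hD : (#D : ℝ) ≤ q * Fintype.card α) (A : Finset α) :
    (#(permsInto A D) : ℝ) ≤ q ^ #A * (Fintype.card α).factorial := by
  induction A using Finset.induction_on with
  | empty => simp [permsInto, Fintype.card_perm]
  | insert a A ha ih =>
    calc (#(permsInto (insert a A) D) : ℝ) ≤ q * #(permsInto A D) :=
          card_permsInto_insert_le hq1 hD ha
      _ ≤ q * (q ^ #A * (Fintype.card α).factorial) := by gcongr
      _ = q ^ #(insert a A) * (Fintype.card α).factorial := by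
          rw [card_insert_of_notMem ha]; ring

theorem card_filter_ge_mul_exp_le_sum_exp {Ω : Type*} [Fintype Ω] (X : Ω → ℝ) {l : ℝ}
    (hl : 0 ≤ l) (t : ℝ) : #{ω | t ≤ X ω} * Real.exp (l * t) ≤ ∑ ω, Real.exp (l * X ω) :=
  calc #{ω | t ≤ X ω} * Real.exp (l * t) ≤ ∑ ω with t ≤ X ω, Real.exp (l * X ω) := by
        rw [← nsmul_eq_mul]
        refine card_nsmul_le_sum _ _ _ fun ω hω => ?_
        have := (mem_filter.mp hω).2
        gcongr
    _ ≤ ∑ ω, Real.exp (l * X ω) :=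
        sum_le_univ_sum_of_nonneg fun _ => (Real.exp_pos _).le

theorem exp_mul_card_filter_eq_sum_powerset (J D : Finset α) (e : Equiv.Perm α) (l : ℝ) :
    Real.exp (l * #{j ∈ J | e j ∈ D}) =
      ∑ A ∈ J.powerset, if e ∈ permsInto A D then (Real.exp l - 1) ^ #A else 0 := by
  calc Real.exp (l * #{j ∈ J | e j ∈ D}) = ∏ j ∈ J, if e j ∈ D then Real.exp l else 1 := by
        rw [prod_ite, prod_const_one, mul_one, prod_const, mul_comm, Real.exp_nat_mul]
    _ = ∏ j ∈ J, (1 + if e j ∈ D then Real.exp l - 1 else 0) :=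
        prod_congr rfl fun j _ => by split_ifs <;> ring
    _ = ∑ A ∈ J.powerset, if e ∈ permsInto A D then (Real.exp l - 1) ^ #A else 0 := by
        simp only [prod_one_add, prod_ite_zero, prod_const, mem_permsInto]

theorem sum_exp_mul_card_filter_le {D : Finset α} {q l : ℝ} (hq0 : 0 ≤ q) (hq1 : q ≤ 1)
    (hl : 0 ≤ l) (hD : (#D : ℝ) ≤ q * Fintype.card α) (J : Finset α) :
    ∑ e : Equiv.Perm α, Real.exp (l * #{j ∈ J | e j ∈ D}) ≤
      (1 + (Real.exp l - 1) * q) ^ #J * (Fintype.card α).factorial := by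
  have hz : 0 ≤ Real.exp l - 1 := sub_nonneg.mpr (Real.one_le_exp hl)
  simp_rw [exp_mul_card_filter_eq_sum_powerset]
  rw [sum_comm, ← prod_const, prod_one_add, sum_mul]
  refine sum_le_sum fun A _ => ?_
  calc (∑ e, if e ∈ permsInto A D then (Real.exp l - 1) ^ #A else 0)
      = (Real.exp l - 1) ^ #A * #(permsInto A D) := by simp [mul_comm]
    _ ≤ (Real.exp l - 1) ^ #A * (q ^ #A * (Fintype.card α).factorial) := by
        gcongr
        exact card_permsInto_le hq0 hq1 hD A
    _ = _ := by rw [prod_const, mul_pow]; ring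

theorem one_add_exp_sub_one_mul_pow_le {q δ : ℝ} (hq0 : 0 ≤ q) (hq1 : q ≤ 1) (hδ0 : 0 ≤ δ)
    (hδ1 : δ ≤ 1) (n : ℕ) :
    (1 + (Real.exp (δ / 2) - 1) * q) ^ n ≤
      Real.exp (-(δ ^ 2 * n / 4)) * Real.exp (δ / 2 * ((q + δ) * n)) := by
  have hz0 : 0 ≤ Real.exp (δ / 2) - 1 := sub_nonneg.mpr (Real.one_le_exp (by positivity))
  have hz : Real.exp (δ / 2) - 1 ≤ δ / 2 + (δ / 2) ^ 2 := by
    have h := Real.abs_exp_sub_one_sub_id_le (x := δ / 2) (by rw [abs_of_nonneg] <;> linarith)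
    linarith [(abs_le.mp h).2]
  calc (1 + (Real.exp (δ / 2) - 1) * q) ^ n ≤ Real.exp ((Real.exp (δ / 2) - 1) * q) ^ n := by
        gcongr
        rw [add_comm]
        exact Real.add_one_le_exp _
    _ = Real.exp (n * ((Real.exp (δ / 2) - 1) * q)) := (Real.exp_nat_mul _ _).symm
    _ ≤ Real.exp (n * (-(δ ^ 2 / 4) + δ / 2 * (q + δ))) := by
        gcongr
        nlinarith [mul_le_mul_of_nonneg_right hz hq0, mul_nonneg (sq_nonneg δ) (sub_nonneg.mpr hq1)]
    _ = _ := by rw [← Real.exp_add]; ring_nf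

theorem card_perm_large_inter_le {D : Finset α} {q δ : ℝ} (hq0 : 0 ≤ q) (hq1 : q ≤ 1)
    (hδ0 : 0 ≤ δ) (hδ1 : δ ≤ 1) (hD : (#D : ℝ) ≤ q * Fintype.card α) (J : Finset α) :
    (#{e : Equiv.Perm α | (q + δ) * #J ≤ (#{j ∈ J | e j ∈ D} : ℝ)} : ℝ) ≤
      Real.exp (-(δ ^ 2 * #J / 4)) * (Fintype.card α).factorial := by
  refine le_of_mul_le_mul_right ?_ (Real.exp_pos (δ / 2 * ((q + δ) * #J)))
  calc _ ≤ ∑ e : Equiv.Perm α, Real.exp (δ / 2 * #{j ∈ J | e j ∈ D}) :=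
        card_filter_ge_mul_exp_le_sum_exp _ (by positivity) _
    _ ≤ (1 + (Real.exp (δ / 2) - 1) * q) ^ #J * (Fintype.card α).factorial :=
        sum_exp_mul_card_filter_le hq0 hq1 (by positivity) hD J
    _ ≤ (Real.exp (-(δ ^ 2 * #J / 4)) * Real.exp (δ / 2 * ((q + δ) * #J))) *
          (Fintype.card α).factorial := by
        gcongr
        exact one_add_exp_sub_one_mul_pow_le hq0 hq1 hδ0 hδ1 _
    _ = _ := by ring

theorem card_perm_exists_large_inter_le {ι : Type*} [Fintype ι] {D : ι → Finset α} {q δ : ℝ}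
    (hq0 : 0 ≤ q) (hq1 : q ≤ 1) (hδ0 : 0 ≤ δ) (hδ1 : δ ≤ 1)
    (hD : ∀ i, (#(D i) : ℝ) ≤ q * Fintype.card α) (J : Finset α) :
    (#{e : Equiv.Perm α | ∃ i, (q + δ) * #J ≤ (#{j ∈ J | e j ∈ D i} : ℝ)} : ℝ) ≤
      Fintype.card ι * (Real.exp (-(δ ^ 2 * #J / 4)) * (Fintype.card α).factorial) :=
  card_filter_exists_le (fun i (e : Equiv.Perm α) => (q + δ) * #J ≤ (#{j ∈ J | e j ∈ D i} : ℝ))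
    fun i => card_perm_large_inter_le hq0 hq1 hδ0 hδ1 (hD i) J

end Permutations

theorem exists_perm_of_two_mul_card_not_le {α : Type*} [Fintype α] {r : α → α → Prop}
    (hrow : ∀ a, 2 * #{b | ¬ r a b} ≤ Fintype.card α)
    (hcol : ∀ b, 2 * #{a | ¬ r a b} ≤ Fintype.card α) : ∃ e : Equiv.Perm α, ∀ a, r a (e a) := by
  have hall : ∀ A : Finset α, #A ≤ #{b | ∃ a ∈ A, r a b} := by
    intro A
    obtain rfl | ⟨a, ha⟩ := A.eq_empty_or_nonempty
    · simp
    by_cases hN : ∃ b, ∀ a ∈ A, ¬ r a b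
    · obtain ⟨b, hb⟩ := hN
      have hA : #A ≤ #{a | ¬ r a b} := card_le_card fun a ha => by simpa using hb a ha
      have hNa : #{b | r a b} ≤ #{b | ∃ a ∈ A, r a b} :=
        card_le_card fun b hb => by simpa using ⟨a, ha, by simpa using hb⟩
      have hsplit : #{b | r a b} + #{b | ¬ r a b} = Fintype.card α :=
        card_filter_add_card_filter_not _
      have := hrow a
      have := hcol b
      omega
    · push Not at hN
      simpa [hN] using card_le_univ A
  obtain ⟨f, hf, hr⟩ := (Fintype.all_card_le_filter_rel_iff_exists_injective r).mp hall
  exact ⟨Equiv.ofBijective f (Finite.injective_iff_bijective.mp hf), hr⟩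

theorem card_filter_coe {α : Type*} (U : Finset α) (p : α → Prop) [DecidablePred p] :
    #{b : U | p b} = #{b ∈ U | p b} := by
  rw [← card_map (.subtype _)]
  congr 1
  ext b
  simp [and_comm]

theorem exists_perm_on_of_two_mul_card_not_le {α : Type*} {r : α → α → Prop} {U : Finset α}
    (hrow : ∀ a ∈ U, 2 * #{b ∈ U | ¬ r a b} ≤ #U) (hcol : ∀ b ∈ U, 2 * #{a ∈ U | ¬ r a b} ≤ #U) :
    ∃ e : Equiv.Perm α, (∀ a ∈ U, e a ∈ U ∧ r a (e a)) ∧ ∀ a ∉ U, e a = a := by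
  obtain ⟨e, he⟩ := exists_perm_of_two_mul_card_not_le (r := fun a b : U => r a b)
    (fun a => by rw [card_filter_coe U (¬ r a ·), Fintype.card_coe]; exact hrow a a.2)
    (fun b => by rw [card_filter_coe U (¬ r · b), Fintype.card_coe]; exact hcol b b.2)
  refine ⟨e.ofSubtype, fun a ha => ?_, fun a ha => e.ofSubtype_apply_of_not_mem ha⟩
  rw [e.ofSubtype_apply_of_mem ha]
  exact ⟨(e _).2, he ⟨a, ha⟩⟩

/-! ### Covering by columns -/

theorem injective_mul_map_mul {α : Type*} (K : Finset α) (μ : Equiv.Perm α)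
    {ρ : Finset α → Equiv.Perm α} (hρ : ∀ U : Finset α, U.map (ρ U).toEmbedding = U) :
    Function.Injective fun π : Equiv.Perm α => μ * ρ (K.map π.toEmbedding) * π := by
  intro π π' h
  have hmap : ∀ τ : Equiv.Perm α, K.map (ρ (K.map τ.toEmbedding) * τ).toEmbedding =
      K.map τ.toEmbedding := fun τ => by
    conv_rhs => rw [← hρ (K.map τ.toEmbedding), map_map]
    rfl
  simp only [mul_assoc, mul_right_inj] at h
  have hK : K.map π.toEmbedding = K.map π'.toEmbedding := by rw [← hmap π, h, hmap π']
  rwa [hK, mul_right_inj] at h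

theorem exists_perm_stabilizing {α : Type*} (r : α → α → Prop) (U : Finset α) :
    ∃ e : Equiv.Perm α, U.map e.toEmbedding = U ∧ (∀ a ∉ U, e a = a) ∧
      ((∀ a ∈ U, 2 * #{b ∈ U | ¬ r a b} ≤ #U) → (∀ b ∈ U, 2 * #{a ∈ U | ¬ r a b} ≤ #U) →
        ∀ a ∈ U, r a (e a)) := by
  by_cases hU : (∀ a ∈ U, 2 * #{b ∈ U | ¬ r a b} ≤ #U) ∧ ∀ b ∈ U, 2 * #{a ∈ U | ¬ r a b} ≤ #U
  · obtain ⟨e, he, hfix⟩ := exists_perm_on_of_two_mul_card_not_le hU.1 hU.2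
    refine ⟨e, eq_of_subset_of_card_le ?_ (card_map _).ge, hfix, fun _ _ a ha => (he a ha).2⟩
    intro b hb
    obtain ⟨a, ha, rfl⟩ := mem_map.mp hb
    exact (he a ha).1
  · exact ⟨.refl α, by simp, fun _ _ => rfl, fun h h' => absurd ⟨h, h'⟩ hU⟩

theorem card_filter_mem_map {α β : Type*} (K : Finset α) (f : α ↪ β) (p : β → Prop)
    [DecidablePred p] : #{b ∈ K.map f | p b} = #{a ∈ K | p (f a)} := by
  rw [filter_map, card_map]
  rfl

theorem exists_injective_forall_of_balanced {α : Type*} {A : Bool → α → α → Prop} {c : Bool}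
    {μ : Equiv.Perm α} (hμ : ∀ a, A c a (μ a)) {σ : α → Bool} {K : Finset α}
    (hK : ∀ j, j ∈ K ↔ σ j = !c) :
    ∃ F : Equiv.Perm α → Equiv.Perm α, Function.Injective F ∧ ∀ π : Equiv.Perm α,
      (∀ a, 2 * #{j ∈ K | ¬ A (!c) a (μ (π j))} ≤ #K) →
      (∀ b, 2 * #{j ∈ K | ¬ A (!c) (π j) (μ b)} ≤ #K) → ∀ j, A (σ j) (π j) (F π j) := by
  choose ρ hρ hfix hedge using exists_perm_stabilizing fun a b => A (!c) a (μ b)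
  refine ⟨_, injective_mul_map_mul K μ hρ, fun π hrow hcol j => ?_⟩
  by_cases hj : j ∈ K
  · rw [(hK j).mp hj]
    refine hedge _ (fun a _ => ?_) (fun b _ => ?_) _ (mem_map_of_mem _ hj)
    · rw [card_filter_mem_map _ _ fun b => ¬ A (!c) a (μ b), card_map]
      exact hrow a
    · rw [card_filter_mem_map _ _ fun a => ¬ A (!c) a (μ b), card_map]
      exact hcol b
  · have hσ : σ j = c := by simpa using mt (hK j).mpr hj
    have hfixed : ρ (K.map π.toEmbedding) (π j) = π j := hfix _ _ (by simpa using hj)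
    simpa [hfixed, hσ] using hμ (π j)

theorem exists_card_le_two_mul_card_filter_eq_not {α : Type*} [Fintype α] (σ : α → Bool) :
    ∃ c, Fintype.card α ≤ 2 * #{j | σ j = !c} := by
  by_contra! h
  have hsplit := card_filter_add_card_filter_not (s := (univ : Finset α)) (fun j => σ j = true)
  have htrue := h true
  have hfalse := h false
  simp only [Bool.not_true, Bool.not_false, Bool.not_eq_true, card_univ] at hsplit htrue hfalse
  omega

theorem card_perm_unbalanced_le {α : Type*} [Fintype α] {r : α → α → Prop} {δ : ℝ}
    (hδ0 : 0 ≤ δ) (hδ1 : δ ≤ 1 / 2)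
    (hrow : ∀ x, (#{y | ¬ r x y} : ℝ) ≤ (1 / 2 - δ) * Fintype.card α)
    (hcol : ∀ y, (#{x | ¬ r x y} : ℝ) ≤ (1 / 2 - δ) * Fintype.card α) (K : Finset α) :
    (#{π : Equiv.Perm α | ¬ ((∀ x, 2 * #{j ∈ K | ¬ r x (π j)} ≤ #K) ∧
        ∀ y, 2 * #{j ∈ K | ¬ r (π j) y} ≤ #K)} : ℝ) ≤
      2 * Fintype.card α * (Real.exp (-(δ ^ 2 * #K / 4)) * (Fintype.card α).factorial) := by
  let D : α ⊕ α → Finset α :=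
    Sum.elim (fun x => univ.filter fun y => ¬ r x y) fun y => univ.filter fun x => ¬ r x y
  have hbad : ∀ π : Equiv.Perm α, ¬ ((∀ x, 2 * #{j ∈ K | ¬ r x (π j)} ≤ #K) ∧
      ∀ y, 2 * #{j ∈ K | ¬ r (π j) y} ≤ #K) →
      ∃ i, (1 / 2 - δ + δ) * #K ≤ (#{j ∈ K | π j ∈ D i} : ℝ) := by
    intro π
    contrapose!
    intro hπ
    have hlt : ∀ i, 2 * #{j ∈ K | π j ∈ D i} ≤ #K := fun i => by
      have : (2 * #{j ∈ K | π j ∈ D i} : ℝ) ≤ #K := by linarith [hπ i]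
      exact_mod_cast this
    exact ⟨fun x => by simpa [D] using hlt (.inl x), fun y => by simpa [D] using hlt (.inr y)⟩
  calc _ ≤ (#{π : Equiv.Perm α | ∃ i, (1 / 2 - δ + δ) * #K ≤ (#{j ∈ K | π j ∈ D i} : ℝ)} : ℝ) := by
        gcongr with π
        exact hbad π
    _ ≤ Fintype.card (α ⊕ α) * (Real.exp (-(δ ^ 2 * #K / 4)) * (Fintype.card α).factorial) :=
        card_perm_exists_large_inter_le (by linarith) (by linarith) hδ0 (by linarith)
          (Sum.rec hrow hcol) K
    _ = _ := by rw [Fintype.card_sum, Nat.cast_add, ← two_mul]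

theorem exists_injective_placement_step {α : Type*} [Fintype α] {A : Bool → α → α → Prop} {δ : ℝ}
    (hδ0 : 0 ≤ δ) (hδ1 : δ ≤ 1 / 2)
    (hrow : ∀ b x, (#{y | ¬ A b x y} : ℝ) ≤ (1 / 2 - δ) * Fintype.card α)
    (hcol : ∀ b y, (#{x | ¬ A b x y} : ℝ) ≤ (1 / 2 - δ) * Fintype.card α) (σ : α → Bool) :
    ∃ F : Equiv.Perm α → Equiv.Perm α, Function.Injective F ∧
      (#{π : Equiv.Perm α | ∃ j, ¬ A (σ j) (π j) (F π j)} : ℝ) ≤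
        2 * Fintype.card α * (Real.exp (-(δ ^ 2 * Fintype.card α / 8)) *
          (Fintype.card α).factorial) := by
  have half : ∀ t : ℕ, (t : ℝ) ≤ (1 / 2 - δ) * Fintype.card α → 2 * t ≤ Fintype.card α := by
    intro t ht
    have : (2 * t : ℝ) ≤ Fintype.card α := by nlinarith [(Fintype.card α).cast_nonneg (α := ℝ)]
    exact_mod_cast this
  obtain ⟨c, hc⟩ := exists_card_le_two_mul_card_filter_eq_not σ
  obtain ⟨μ, hμ⟩ := exists_perm_of_two_mul_card_not_le (r := A c)
    (fun x => half _ (hrow c x)) (fun y => half _ (hcol c y))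
  obtain ⟨F, hF, hgood⟩ :=
    exists_injective_forall_of_balanced (σ := σ) (K := {j | σ j = !c}) hμ (by simp)
  have hrowμ : ∀ x, (#{y | ¬ A (!c) x (μ y)} : ℝ) ≤ (1 / 2 - δ) * Fintype.card α := fun x => by
    refine le_of_eq_of_le ?_ (hrow (!c) x)
    exact_mod_cast card_equiv μ (by simp)
  refine ⟨F, hF, (Nat.cast_le.mpr (card_le_card ?_)).trans
    ((card_perm_unbalanced_le hδ0 hδ1 hrowμ (fun y => hcol (!c) (μ y)) {j | σ j = !c}).trans ?_)⟩
  · refine monotone_filter_right _ fun π _ => ?_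
    rintro ⟨j, hj⟩ ⟨hx, hy⟩
    exact hj (hgood π hx hy j)
  · have hc' : (Fintype.card α : ℝ) ≤ 2 * #{j | σ j = !c} := by exact_mod_cast hc
    gcongr _ * (?_ * _)
    refine Real.exp_le_exp.mpr ?_
    nlinarith [mul_le_mul_of_nonneg_left hc' (sq_nonneg δ)]

theorem exists_orbit_forall_not {Ω : Type*} [Fintype Ω] {F : ℕ → Ω → Ω}
    (hF : ∀ i, Function.Injective (F i)) (p : ℕ → Ω → Prop)
    [∀ i, DecidablePred (p i)] {b : ℝ} {k : ℕ}
    (hp : ∀ i, (#{ω | p i ω} : ℝ) ≤ b) (hb : k * b < Fintype.card Ω) :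
    ∃ ω : ℕ → Ω, (∀ i, ω (i + 1) = F i (ω i)) ∧ ∀ i < k, ¬ p i (ω i) := by
  obtain ⟨H, hH0, hHs⟩ : ∃ H : ℕ → Ω → Ω, H 0 = id ∧ ∀ i, H (i + 1) = F i ∘ H i :=
    ⟨fun i => Nat.rec id (fun i h => F i ∘ h) i, rfl, fun _ => rfl⟩
  have hH : ∀ i, Function.Injective (H i) := fun i => by
    induction i with
    | zero => exact hH0 ▸ Function.injective_id
    | succ i ih => exact hHs i ▸ (hF i).comp ih
  have hpH : ∀ i : Fin k, (#{ω | p i (H i ω)} : ℝ) ≤ b := fun i =>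
    (Nat.cast_le.mpr (card_le_card_of_injOn (H i) (fun ω hω => by simpa using hω)
      (hH i).injOn)).trans (hp i)
  obtain ⟨ω, hω⟩ := exists_forall_not_of_card_mul_lt _ hpH (by rwa [Fintype.card_fin])
  exact ⟨fun i => H i ω, fun i => congrFun (hHs i) ω, fun i hi => hω ⟨i, hi⟩⟩

theorem exists_placements {α : Type*} [Fintype α] {A : ℕ → Bool → α → α → Prop} {δ : ℝ} {k : ℕ}
    (hδ0 : 0 ≤ δ) (hδ1 : δ ≤ 1 / 2)
    (hrow : ∀ i b x, (#{y | ¬ A i b x y} : ℝ) ≤ (1 / 2 - δ) * Fintype.card α)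
    (hcol : ∀ i b y, (#{x | ¬ A i b x y} : ℝ) ≤ (1 / 2 - δ) * Fintype.card α)
    (hk : k * (2 * Fintype.card α * Real.exp (-(δ ^ 2 * Fintype.card α / 8))) < 1)
    (σ : α → ℕ → Bool) :
    ∃ P : ℕ → Equiv.Perm α, ∀ i < k, ∀ j, A i (σ j i) (P i j) (P (i + 1) j) := by
  choose F hF using fun i =>
    exists_injective_placement_step hδ0 hδ1 (hrow i) (hcol i) (σ · i)
  obtain ⟨P, hP, hgood⟩ := exists_orbit_forall_not (k := k) (fun i => (hF i).1)
    (fun i π => ∃ j, ¬ A i (σ j i) (π j) (F i π j))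
    (fun i => (hF i).2) (by
    have hpos : (0 : ℝ) < (Fintype.card α).factorial := by positivity
    rw [Fintype.card_perm]
    linarith [mul_lt_mul_of_pos_right hk hpos])
  refine ⟨P, fun i hi j => ?_⟩
  rw [hP]
  exact not_not.mp fun h => hgood i hi ⟨j, h⟩

/-- `DirEdge G b x y` says that `G` has the edge `x → y` if `b = true` and the edge `y → x` if
`b = false`: the condition that a direction pattern with entry `b` imposes on consecutive
vertices `x`, `y`. -/
def DirEdge {V : Type*} (G : V → V → Prop) (b : Bool) (x y : V) : Prop :=
  if b then G x y else G y x

theorem dirEdge_not {V : Type*} {G : V → V → Prop} {b : Bool} {x y : V} :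
    DirEdge G (!b) x y ↔ DirEdge G b y x := by
  cases b <;> rfl

theorem exists_equiv_prod_forall_card_le {ι κ α W : Type*} [Fintype ι] [Fintype κ] [Fintype α]
    [Fintype W] (hW : Fintype.card (κ × α) = Fintype.card W) {D : ι → Finset W} {q δ : ℝ}
    (hq0 : 0 ≤ q) (hq1 : q ≤ 1) (hδ0 : 0 ≤ δ) (hδ1 : δ ≤ 1)
    (hD : ∀ t, (#(D t) : ℝ) ≤ q * Fintype.card W)
    (hsmall : Fintype.card κ * (Fintype.card ι * Real.exp (-(δ ^ 2 * Fintype.card α / 4))) < 1) :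
    ∃ e : κ × α ≃ W, ∀ i t, (#{a | e (i, a) ∈ D t} : ℝ) ≤ (q + δ) * Fintype.card α := by
  let e₀ : κ × α ≃ W := Fintype.equivOfCardEq hW
  let row : κ → Finset W := fun i => univ.map ((Function.Embedding.sectR i α).trans e₀.toEmbedding)
  have hrow : ∀ i, #(row i) = Fintype.card α := fun i => card_map _
  have hbad : ∀ i, (#{e : Equiv.Perm W | ∃ t,
      (q + δ) * Fintype.card α ≤ (#{w ∈ row i | e w ∈ D t} : ℝ)} : ℝ) ≤
      Fintype.card ι * (Real.exp (-(δ ^ 2 * Fintype.card α / 4)) *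
        (Fintype.card W).factorial) := fun i => by
    simpa only [hrow] using card_perm_exists_large_inter_le hq0 hq1 hδ0 hδ1 hD (row i)
  obtain ⟨e, he⟩ := exists_forall_not_of_card_mul_lt _ hbad (by
    have hpos : (0 : ℝ) < (Fintype.card W).factorial := by positivity
    rw [Fintype.card_perm]
    linarith [mul_lt_mul_of_pos_right hsmall hpos])
  refine ⟨e₀.trans e, fun i t => ?_⟩
  have hit := he i
  push Not at hit
  refine le_of_eq_of_le ?_ (hit t).le
  rw [card_filter_mem_map _ _ fun w => e w ∈ D t]
  rfl

theorem exists_covering_columns {W : Type*} [Fintype W] {G : W → W → Prop} {k m : ℕ} [NeZero k]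
    (hW : Fintype.card W = k * m) {δ : ℝ} (hδ0 : 0 ≤ δ) (hδ1 : 2 * δ ≤ 1 / 2)
    (hG : ∀ b x, (#{y | ¬ DirEdge G b x y} : ℝ) ≤ (1 / 2 - 2 * δ) * Fintype.card W)
    (hsmall : 4 * (k * m : ℝ) ^ 2 * Real.exp (-(δ ^ 2 * m / 8)) < 1) (σ : Fin m → ℕ → Bool) :
    ∃ Y : Fin m → ℕ → W, (∀ w, ∃ j, ∃ i < k, Y j i = w) ∧
      ∀ j, ∀ i < k, DirEdge G (σ j i) (Y j i) (Y j (i + 1)) := by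
  have hk2 : (k : ℝ) ≤ k ^ 2 := by exact_mod_cast Nat.le_self_pow two_ne_zero k
  have hm2 : (m : ℝ) ≤ m ^ 2 := by exact_mod_cast Nat.le_self_pow two_ne_zero m
  obtain ⟨e, he⟩ := exists_equiv_prod_forall_card_le (κ := Fin k) (α := Fin m) (W := W)
    (D := fun t : Bool × W => univ.filter fun y => ¬ DirEdge G t.1 t.2 y) (by simp [hW])
    (by linarith) (by linarith) hδ0 (by linarith) (fun t => hG t.1 t.2) (by
      refine lt_of_le_of_lt ?_ hsmall
      rw [Fintype.card_prod, hW, Fintype.card_fin, Fintype.card_fin, Fintype.card_bool]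
      calc (k : ℝ) * ((2 * (k * m) : ℕ) * Real.exp (-(δ ^ 2 * m / 4)))
          = 2 * (k ^ 2 * m) * Real.exp (-(δ ^ 2 * m / 4)) := by push_cast; ring
        _ ≤ 4 * (k ^ 2 * m ^ 2) * Real.exp (-(δ ^ 2 * m / 8)) := by gcongr <;> norm_num
        _ = _ := by ring)
  have hcell : ∀ i b x, (#{a | ¬ DirEdge G b x (e (i, a))} : ℝ) ≤
      (1 / 2 - δ) * Fintype.card (Fin m) := fun i b x => by
    have := he i (b, x)
    simp only [mem_filter, mem_univ, true_and] at this
    linarith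
  obtain ⟨P, hP⟩ := exists_placements (k := k)
    (A := fun i b a a' => DirEdge G b (e (Fin.ofNat k i, a)) (e (Fin.ofNat k (i + 1), a')))
    hδ0 (by linarith) (fun i b a => hcell _ _ _)
    (fun i b a' => by simpa only [← dirEdge_not (G := G) (b := b)] using hcell _ (!b) _) (by
      refine lt_of_le_of_lt ?_ hsmall
      rw [Fintype.card_fin]
      calc (k : ℝ) * (2 * m * Real.exp (-(δ ^ 2 * m / 8)))
          = 2 * (k * m) * Real.exp (-(δ ^ 2 * m / 8)) := by ring
        _ ≤ 4 * (k ^ 2 * m ^ 2) * Real.exp (-(δ ^ 2 * m / 8)) := by gcongr; norm_num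
        _ = _ := by ring) σ
  refine ⟨fun j i => e (Fin.ofNat k i, P i j), fun w => ?_, fun j i hi => hP i hi j⟩
  obtain ⟨⟨i, a⟩, rfl⟩ := e.surjective w
  exact ⟨(P i).symm a, i, i.2, by simp⟩

/-! ### Greedy choice of distinct vertices -/

section Greedy
variable {ι V : Type*} [DecidableEq ι] {s u : Finset ι}

theorem injOn_update_insert {g : ι → V} (hg : Set.InjOn g s) {a : ι} (ha : a ∉ s)
    {v : V} (hv : v ∉ s.image g) :
    Set.InjOn (Function.update g a v) (insert a s : Finset ι) := by
  have heq : Set.EqOn g (Function.update g a v) s := fun i hi =>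
    (Function.update_of_ne (ne_of_mem_of_not_mem hi ha) _ _).symm
  rw [coe_insert, Set.injOn_insert (mod_cast ha)]
  refine ⟨hg.congr heq, ?_⟩
  rwa [Function.update_self, ← heq.image_eq, ← coe_image, mem_coe]

theorem exists_extend_injOn {f : ι → V} (hsu : s ⊆ u) (hf : Set.InjOn f s)
    (Φ : Finset ι → (ι → V) → Prop) (hΦ : Φ ∅ f)
    (hstep : ∀ t ⊆ u \ s, ∀ a ∈ u \ s, a ∉ t → ∀ g, Φ t g →
      ∃ v ∉ (s ∪ t).image g, Φ (insert a t) (Function.update g a v)) :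
    ∃ g, Set.EqOn g f s ∧ Set.InjOn g u ∧ Φ (u \ s) g := by
  suffices h : ∃ g, Set.EqOn g f s ∧ Set.InjOn g (s ∪ u \ s : Finset ι) ∧ Φ (u \ s) g by
    rwa [union_sdiff_of_subset hsu] at h
  refine induction_on' (motive := fun t => ∃ g, Set.EqOn g f s ∧
    Set.InjOn g (s ∪ t : Finset ι) ∧ Φ t g) (u \ s) ?_ ?_
  · exact ⟨f, Set.eqOn_refl f s, by simpa using hf, hΦ⟩
  · rintro a t ha ht hat ⟨g, hgf, hg, hΦg⟩
    have has : a ∉ s := (mem_sdiff.mp ha).2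
    obtain ⟨v, hv, hΦv⟩ := hstep t ht a ha hat g hΦg
    refine ⟨_, fun i hi => ?_, ?_, hΦv⟩
    · rw [Function.update_of_ne (ne_of_mem_of_not_mem hi has), hgf hi]
    · rw [union_insert]
      exact injOn_update_insert hg (by simp [has, hat]) hv

theorem card_image_union_lt (hsu : s ⊆ u) {t : Finset ι} (ht : t ⊆ u \ s) {a : ι}
    (ha : a ∈ u \ s) (hat : a ∉ t) (g : ι → V) : #((s ∪ t).image g) < #u :=
  card_image_le.trans_lt <| card_lt_card <|
    (ssubset_iff_of_subset (union_subset hsu (ht.trans sdiff_subset))).mpr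
      ⟨a, (mem_sdiff.mp ha).1, by simp [(mem_sdiff.mp ha).2, hat]⟩

theorem exists_extend_injOn_forall_mem {f : ι → V} (hsu : s ⊆ u) (hf : Set.InjOn f s)
    (D : ι → Finset V) (hD : ∀ i, #u ≤ #(D i)) :
    ∃ g, Set.EqOn g f s ∧ Set.InjOn g u ∧ ∀ i ∈ u \ s, g i ∈ D i := by
  refine exists_extend_injOn hsu hf (fun t g => ∀ i ∈ t, g i ∈ D i) (by simp) ?_
  intro t ht a ha hat g hg
  obtain ⟨v, hvD, hv⟩ := exists_mem_notMem_of_card_lt_card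
    ((card_image_union_lt hsu ht ha hat g).trans_le (hD a))
  refine ⟨v, hv, forall_mem_insert _ _ _ |>.mpr ⟨by simpa, fun i hi => ?_⟩⟩
  rw [Function.update_of_ne (ne_of_mem_of_not_mem hi hat)]
  exact hg i hi

variable {κ I : Type*} [DecidableEq κ] [Fintype V] {C : I → Finset V}

theorem exists_notMem_card_filter_notMem_le {S : Finset V} {c : ℕ} (hS : Sᶜ.Nonempty)
    (hC : ∀ i, #S + c ≤ #(C i)) (J : Finset I) :
    ∃ v ∉ S, (#{i ∈ J | v ∉ C i} : ℝ) ≤ #J * (1 - c / Fintype.card V) := by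
  have hcount : ∑ v ∈ Sᶜ, #{i ∈ J | v ∈ C i} = ∑ i ∈ J, #(C i \ S) := by
    refine (sum_card_bipartiteAbove_eq_sum_card_bipartiteBelow fun v i => v ∈ C i).trans ?_
    refine sum_congr rfl fun i _ => congrArg card ?_
    ext v
    simp [mem_bipartiteBelow, and_comm]
  have hpos : (0 : ℝ) < Fintype.card V := by
    exact_mod_cast Fintype.card_pos_iff.mpr ⟨hS.choose⟩
  have hsum : ∑ _v ∈ Sᶜ, (#J * (c / Fintype.card V) : ℝ) ≤ ∑ v ∈ Sᶜ, (#{i ∈ J | v ∈ C i} : ℝ) := by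
    calc ∑ _v ∈ Sᶜ, (#J * (c / Fintype.card V) : ℝ)
        ≤ ∑ _v : V, (#J * (c / Fintype.card V) : ℝ) :=
          sum_le_univ_sum_of_nonneg fun _ => by positivity
      _ = ∑ _i ∈ J, (c : ℝ) := by
          rw [sum_const, sum_const, card_univ]; simp; field_simp
      _ ≤ ∑ i ∈ J, (#(C i \ S) : ℝ) := by
          gcongr with i
          have := hC i
          have := le_card_sdiff S (C i)
          omega
      _ = _ := by exact_mod_cast hcount.symm
  obtain ⟨v, hv, hle⟩ := exists_le_of_sum_le hS hsum
  refine ⟨v, mem_compl.mp hv, ?_⟩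
  have : (#{i ∈ J | v ∈ C i} : ℝ) + #{i ∈ J | v ∉ C i} = #J := by
    exact_mod_cast card_filter_add_card_filter_not _
  linarith

theorem exists_extend_injOn_card_unhit_le [Fintype I] [Nonempty I] {f : ι → V} (hsu : s ⊆ u)
    (hf : Set.InjOn f s) (owner : ι → κ) {c : ℕ} (hC : ∀ i, #u + c ≤ #(C i)) :
    ∃ g, Set.EqOn g f s ∧ Set.InjOn g u ∧ ∀ q,
      (#{i | ∀ j ∈ u \ s, owner j = q → g j ∉ C i} : ℝ) ≤
        Fintype.card I * (1 - c / Fintype.card V) ^ #{j ∈ u \ s | owner j = q} := by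
  have hc : (0 : ℝ) ≤ 1 - c / Fintype.card V := by
    have : c ≤ Fintype.card V :=
      le_add_self.trans ((hC (Classical.arbitrary I)).trans (card_le_univ _))
    exact sub_nonneg.mpr (div_le_one_of_le₀ (mod_cast this) (Nat.cast_nonneg _))
  refine exists_extend_injOn hsu hf
    (fun t g => ∀ q, (#{i | ∀ j ∈ t, owner j = q → g j ∉ C i} : ℝ) ≤
      Fintype.card I * (1 - c / Fintype.card V) ^ #{j ∈ t | owner j = q})
    (by simp [card_univ]) ?_
  intro t ht a ha hat g hg
  have hlt := card_image_union_lt hsu ht ha hat g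
  have hcard : ∀ i, #((s ∪ t).image g) + c ≤ #(C i) := fun i => by have := hC i; omega
  obtain ⟨w, -, hw⟩ := exists_mem_notMem_of_card_lt_card
    (hlt.trans_le (le_self_add.trans (hC (Classical.arbitrary I))))
  obtain ⟨v, hv, hle⟩ := exists_notMem_card_filter_notMem_le ⟨w, mem_compl.mpr hw⟩ hcard
    {i | ∀ j ∈ t, owner j = owner a → g j ∉ C i}
  refine ⟨v, hv, fun q => ?_⟩
  have hupd : ∀ i, (∀ j ∈ t, owner j = q → Function.update g a v j ∉ C i) ↔
      ∀ j ∈ t, owner j = q → g j ∉ C i := fun i => by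
    refine forall₂_congr fun j hj => ?_
    rw [Function.update_of_ne (ne_of_mem_of_not_mem hj hat)]
  simp only [forall_mem_insert, hupd, Function.update_self]
  by_cases hq : owner a = q
  · subst hq
    rw [filter_insert, if_pos rfl, card_insert_of_notMem (by simp [hat]), pow_succ, ← mul_assoc]
    simp only [forall_const, and_comm (a := v ∉ C _), ← filter_filter]
    exact hle.trans (mul_le_mul_of_nonneg_right (hg (owner a)) hc)
  · simpa [hq, filter_insert] using hg q

theorem exists_extend_injOn_hit [Fintype I] [Nonempty I] {f : ι → V} (hsu : s ⊆ u)
    (hf : Set.InjOn f s) (owner : ι → κ) {c T : ℕ} (hC : ∀ i, #u + c ≤ #(C i))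
    (hT : Fintype.card I * (1 - c / Fintype.card V : ℝ) ^ T < 1) :
    ∃ g, Set.EqOn g f s ∧ Set.InjOn g u ∧ ∀ q, T ≤ #{j ∈ u \ s | owner j = q} →
      ∀ i, ∃ j ∈ u \ s, owner j = q ∧ g j ∈ C i := by
  obtain ⟨g, hgf, hg, hunhit⟩ := exists_extend_injOn_card_unhit_le hsu hf owner hC
  refine ⟨g, hgf, hg, fun q hq i => ?_⟩
  have hc : (c : ℝ) / Fintype.card V ≤ 1 :=
    div_le_one_of_le₀ (mod_cast le_add_self.trans ((hC i).trans (card_le_univ _)))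
      (Nat.cast_nonneg _)
  have hlt : (#{i | ∀ j ∈ u \ s, owner j = q → g j ∉ C i} : ℝ) < 1 := by
    refine (hunhit q).trans_lt (lt_of_le_of_lt ?_ hT)
    refine mul_le_mul_of_nonneg_left ?_ (Nat.cast_nonneg _)
    exact pow_le_pow_of_le_one (sub_nonneg.mpr hc) (sub_le_self 1 (by positivity)) hq
  have hempty := card_eq_zero.mp (Nat.lt_one_iff.mp (mod_cast hlt))
  have := filter_eq_empty_iff.mp hempty (mem_univ i)
  push Not at this
  exact this

end Greedy

/-! ### The absorbing path -/

/-- The vertices `z` that can be placed between `x` and `y`, in the sense that the pair `x`, `z`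
realises the direction `b₁` and the pair `z`, `y` the direction `b₂`. -/
noncomputable def between {V : Type*} [Fintype V] (G : V → V → Prop) (b₁ b₂ : Bool) (x y : V) :
    Finset V :=
  {z | DirEdge G b₁ x z ∧ DirEdge G b₂ z y}

section Absorbing
variable {V : Type*} [Fintype V] {G : V → V → Prop}

theorem mem_between {b₁ b₂ : Bool} {x y z : V} :
    z ∈ between G b₁ b₂ x y ↔ DirEdge G b₁ x z ∧ DirEdge G b₂ z y := by
  simp [between]

theorem two_mul_le_card_between {d : ℝ}
    (hdeg : ∀ b x, (Fintype.card V : ℝ) / 2 + d ≤ #{y | DirEdge G b x y}) (b₁ b₂ : Bool) (x y : V) :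
    2 * d ≤ #(between G b₁ b₂ x y) := by
  let A : Finset V := univ.filter fun z => DirEdge G b₁ x z
  let B : Finset V := univ.filter fun z => DirEdge G (!b₂) y z
  have heq : between G b₁ b₂ x y = A ∩ B := by
    ext z; simp [A, B, mem_between, dirEdge_not]
  have hunion := card_le_univ (A ∪ B)
  have hadd := card_union_add_card_inter A B
  rw [← heq] at hadd
  rify at hunion hadd
  have hA : (Fintype.card V : ℝ) / 2 + d ≤ #A := hdeg b₁ x
  have hB : (Fintype.card V : ℝ) / 2 + d ≤ #B := hdeg (!b₂) y
  linarith

/-- `X 0, …, X (4M - 1)` is a path with directions `η`, and `X (4M), …, X (4M + Q - 1)` are `Q`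
further vertices, the spares. The vertices `X (4s + 1)` are called slots. In the slot `4s + 1` the
path may use the spare `X (4M + s % Q)` instead, and for every spare `q` each ordered pair of
vertices, with any two prescribed directions, admits between its members a slot vertex that `q` can
replace. Hence the path can release, for each spare independently, a vertex that fits at a
prescribed place elsewhere. -/
structure IsAbsorbingPath (G : V → V → Prop) (η : ℕ → Bool) (M Q : ℕ) (X : ℕ → V) : Prop where
  injOn : Set.InjOn X (range (4 * M + Q))
  edge : ∀ i, i + 1 < 4 * M → DirEdge G (η i) (X i) (X (i + 1))
  replace_left : ∀ s < M, DirEdge G (η (4 * s)) (X (4 * s)) (X (4 * M + s % Q))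
  replace_right : ∀ s < M, DirEdge G (η (4 * s + 1)) (X (4 * M + s % Q)) (X (4 * s + 2))
  insert : ∀ q < Q, ∀ b₁ b₂ x y, ∃ s < M, s % Q = q ∧ X (4 * s + 1) ∈ between G b₁ b₂ x y

theorem le_card_filter_slots {M Q T q : ℕ} (hQT : Q * T ≤ M) (hq : q < Q) :
    T ≤ #{j ∈ {i ∈ range (4 * M + Q) | 4 * M ≤ i ∨ i % 4 = 1} |
      (if j < 4 * M then j / 4 % Q else Q) = q} := by
  rw [← card_range T]
  refine card_le_card_of_injOn (fun t => 4 * (q + Q * t) + 1) (fun t ht => ?_) ?_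
  · have hlt : q + Q * t < M := by
      have := mem_range.mp ht
      nlinarith
    have hdiv : (4 * (q + Q * t) + 1) / 4 = q + Q * t := by omega
    have hmod : (q + Q * t) % Q = q := by rw [Nat.add_mul_mod_self_left, Nat.mod_eq_of_lt hq]
    have hlt' : 4 * (q + Q * t) + 1 < 4 * M := by omega
    simp only [coe_filter, mem_filter, mem_range, Set.mem_ofPred_eq, hdiv, hmod, if_pos hlt']
    exact ⟨⟨by omega, by omega⟩, trivial⟩
  · intro t _ t' _ h
    exact Nat.eq_of_mul_eq_mul_left (Nat.zero_lt_of_lt hq) (by simpa using h)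

theorem exists_slots [Nonempty V] {M Q T c : ℕ} (hQT : Q * T ≤ M)
    (hcodeg : ∀ b₁ b₂ x y, 4 * M + Q + c ≤ #(between G b₁ b₂ x y))
    (hT : 4 * (Fintype.card V : ℝ) ^ 2 * (1 - c / Fintype.card V) ^ T < 1) :
    ∃ X : ℕ → V, Set.InjOn X ({i ∈ range (4 * M + Q) | 4 * M ≤ i ∨ i % 4 = 1} : Finset ℕ) ∧
      ∀ q < Q, ∀ b₁ b₂ x y, ∃ s < M, s % Q = q ∧ X (4 * s + 1) ∈ between G b₁ b₂ x y := by
  obtain ⟨X, -, hX, hhit⟩ := exists_extend_injOn_hit (I := Bool × Bool × V × V) (c := c) (T := T)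
    (empty_subset {i ∈ range (4 * M + Q) | 4 * M ≤ i ∨ i % 4 = 1})
    (f := fun _ => Classical.arbitrary V) (by simp)
    (fun j => if j < 4 * M then j / 4 % Q else Q)
    (C := fun t => between G t.1 t.2.1 t.2.2.1 t.2.2.2)
    (fun t => (Nat.add_le_add_right ((card_filter_le _ _).trans_eq (card_range _)) c).trans
      (hcodeg ..))
    (by simpa [Fintype.card_prod, ← mul_assoc, sq, show (2 * 2 : ℝ) = 4 by norm_num] using hT)
  refine ⟨X, hX, fun q hq b₁ b₂ x y => ?_⟩
  rw [sdiff_empty] at hhit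
  obtain ⟨j, hj, howner, hmem⟩ := hhit q (le_card_filter_slots hQT hq) (b₁, b₂, x, y)
  simp only [mem_filter, mem_range] at hj
  split_ifs at howner with hlt
  · refine ⟨j / 4, by omega, howner, ?_⟩
    rwa [show 4 * (j / 4) + 1 = j by omega]
  · omega

theorem exists_slot_neighbors (η : ℕ → Bool) {M Q : ℕ} [NeZero Q] {X : ℕ → V}
    (hX : Set.InjOn X ({i ∈ range (4 * M + Q) | 4 * M ≤ i ∨ i % 4 = 1} : Finset ℕ))
    (hcodeg : ∀ b₁ b₂ x y, 4 * M + Q ≤ #(between G b₁ b₂ x y)) :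
    ∃ Y : ℕ → V, Set.EqOn Y X ({i ∈ range (4 * M + Q) | 4 * M ≤ i ∨ i % 4 = 1} : Finset ℕ) ∧
      Set.InjOn Y ({i ∈ range (4 * M + Q) | 4 * M ≤ i ∨ i % 4 ≠ 3} : Finset ℕ) ∧ ∀ s < M,
        Y (4 * s) ∈
          between G (!η (4 * s)) (η (4 * s)) (Y (4 * s + 1)) (Y (4 * M + s % Q)) ∧
        Y (4 * s + 2) ∈
          between G (η (4 * s + 1)) (!η (4 * s + 1)) (Y (4 * s + 1)) (Y (4 * M + s % Q)) := by
  obtain ⟨Y, hYX, hY, hmem⟩ := exists_extend_injOn_forall_mem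
    (u := {i ∈ range (4 * M + Q) | 4 * M ≤ i ∨ i % 4 ≠ 3})
    (monotone_filter_right _ fun i _ => by omega) hX
    (fun i => if i % 4 = 0 then
      between G (!η i) (η i) (X (4 * (i / 4) + 1)) (X (4 * M + i / 4 % Q)) else
      between G (η (4 * (i / 4) + 1)) (!η (4 * (i / 4) + 1)) (X (4 * (i / 4) + 1))
        (X (4 * M + i / 4 % Q)))
    (fun i => by
      split_ifs <;> exact ((card_filter_le _ _).trans_eq (card_range _)).trans (hcodeg ..))
  refine ⟨Y, hYX, hY, fun s hs => ?_⟩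
  have hmod : s % Q < Q := Nat.mod_lt _ (NeZero.pos Q)
  have hslot : Y (4 * s + 1) = X (4 * s + 1) := hYX (by simp; omega)
  have hspare : Y (4 * M + s % Q) = X (4 * M + s % Q) := hYX (by simp; omega)
  have hbefore := hmem (4 * s) (by simp; omega)
  have hafter := hmem (4 * s + 2) (by simp; omega)
  rw [if_pos (by omega), show 4 * s / 4 = s by omega] at hbefore
  rw [if_neg (by omega), show (4 * s + 2) / 4 = s by omega] at hafter
  rw [hslot, hspare]
  exact ⟨hbefore, hafter⟩

theorem exists_connectors (η : ℕ → Bool) {M Q : ℕ} [NeZero Q] {X : ℕ → V}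
    (hX : Set.InjOn X ({i ∈ range (4 * M + Q) | 4 * M ≤ i ∨ i % 4 ≠ 3} : Finset ℕ))
    (hcodeg : ∀ b₁ b₂ x y, 4 * M + Q ≤ #(between G b₁ b₂ x y)) :
    ∃ Y : ℕ → V, Set.EqOn Y X ({i ∈ range (4 * M + Q) | 4 * M ≤ i ∨ i % 4 ≠ 3} : Finset ℕ) ∧
      Set.InjOn Y (range (4 * M + Q)) ∧ ∀ s < M,
        Y (4 * s + 3) ∈
          between G (η (4 * s + 2)) (η (4 * s + 3)) (Y (4 * s + 2)) (Y (4 * s + 4)) := by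
  obtain ⟨Y, hYX, hY, hmem⟩ := exists_extend_injOn_forall_mem (filter_subset _ _) hX
    (fun i => between G (η (i - 1)) (η i) (X (i - 1)) (X (i + 1)))
    (fun i => (card_range _).trans_le (hcodeg ..))
  refine ⟨Y, hYX, hY, fun s hs => ?_⟩
  have hQ := NeZero.pos Q
  rw [show Y (4 * s + 2) = X (4 * s + 2) from hYX (by simp; omega),
    show Y (4 * s + 4) = X (4 * s + 4) from hYX (by simp; omega)]
  exact hmem (4 * s + 3) (by simp; omega)

theorem exists_isAbsorbingPath [Nonempty V] (η : ℕ → Bool) {M Q T c : ℕ} [NeZero Q]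
    (hQT : Q * T ≤ M) (hcodeg : ∀ b₁ b₂ x y, 4 * M + Q + c ≤ #(between G b₁ b₂ x y))
    (hT : 4 * (Fintype.card V : ℝ) ^ 2 * (1 - c / Fintype.card V) ^ T < 1) :
    ∃ X : ℕ → V, IsAbsorbingPath G η M Q X := by
  have hcodeg' : ∀ b₁ b₂ x y, 4 * M + Q ≤ #(between G b₁ b₂ x y) := fun b₁ b₂ x y =>
    le_self_add.trans (hcodeg b₁ b₂ x y)
  obtain ⟨X, hX, hinsert⟩ := exists_slots hQT hcodeg hT
  obtain ⟨Y, hYX, hY, hnbrs⟩ := exists_slot_neighbors η hX hcodeg'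
  obtain ⟨Z, hZY, hZ, hconn⟩ := exists_connectors η hY hcodeg'
  have hmod : ∀ s, s % Q < Q := fun s => Nat.mod_lt _ (NeZero.pos Q)
  have hZ_spare : ∀ s, Z (4 * M + s % Q) = Y (4 * M + s % Q) := fun s =>
    hZY (by simp [hmod])
  have hZ_slot : ∀ s < M, ∀ r < 3, Z (4 * s + r) = Y (4 * s + r) := fun s hs r hr =>
    hZY (by simp; omega)
  simp only [mem_between, dirEdge_not] at hnbrs hconn
  refine ⟨Z, hZ, fun i hi => ?_, fun s hs => ?_, fun s hs => ?_, fun q hq b₁ b₂ x y => ?_⟩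
  · obtain ⟨s, rfl | rfl | rfl | rfl⟩ :
        ∃ s, i = 4 * s ∨ i = 4 * s + 1 ∨ i = 4 * s + 2 ∨ i = 4 * s + 3 := ⟨i / 4, by omega⟩
    · rw [← add_zero (4 * s), hZ_slot s (by omega) 0 (by simp), add_assoc,
        hZ_slot s (by omega) 1 (by simp)]
      exact (hnbrs s (by omega)).1.1
    · rw [add_assoc, hZ_slot s (by omega) 1 (by simp), hZ_slot s (by omega) 2 (by simp)]
      exact (hnbrs s (by omega)).2.1
    · exact (hconn s (by omega)).1
    · exact (hconn s (by omega)).2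
  · rw [hZ_spare, ← add_zero (4 * s), hZ_slot s hs 0 (by simp)]
    exact (hnbrs s hs).1.2
  · rw [hZ_spare, hZ_slot s hs 2 (by simp)]
    exact (hnbrs s hs).2.2
  · obtain ⟨s, hs, hsq, hmem⟩ := hinsert q hq b₁ b₂ x y
    refine ⟨s, hs, hsq, ?_⟩
    rwa [hZ_slot s hs 1 (by simp), hYX (by simp; omega)]

end Absorbing

/-! ### Closing the cycle -/

theorem exists_perm_forall_edge_swap {P V ι : Type*} {E : P → V → V → Prop} {next : P → P}
    {f : P → V} (a : ι ↪ P) (σ : Equiv.Perm ι) (hindep : ∀ i j, next (a i) ≠ a j)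
    (haway : ∀ p, p ∉ Set.range a → next p ∉ Set.range a → E p (f p) (f (next p)))
    (hbefore : ∀ i p, next p = a i → E p (f p) (f (a (σ i))))
    (hafter : ∀ i, E (a i) (f (a (σ i))) (f (next (a i)))) :
    ∃ τ : Equiv.Perm P, ∀ p, E p (f (τ p)) (f (τ (next p))) := by
  refine ⟨σ.viaEmbedding a, fun p => ?_⟩
  by_cases hp : p ∈ Set.range a
  · obtain ⟨i, rfl⟩ := hp
    rw [σ.viaEmbedding_apply, σ.viaEmbedding_apply_of_notMem a _
      (fun ⟨j, hj⟩ => hindep i j hj.symm)]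
    exact hafter i
  rw [σ.viaEmbedding_apply_of_notMem a p hp]
  by_cases hnext : next p ∈ Set.range a
  · obtain ⟨i, hi⟩ := hnext
    rw [← hi, σ.viaEmbedding_apply]
    exact hbefore i p hi.symm
  · rw [σ.viaEmbedding_apply_of_notMem a _ hnext]
    exact haway p hp hnext

/-- A partition of the cyclic order `ZMod n` into consecutive intervals, one for each `q : Fin Q` in
this order, the `q`-th having length `w q` and first element `start q`. -/
structure IsCyclicPartition {Q n : ℕ} [NeZero Q] (w : Fin Q → ℕ) (start : Fin Q → ZMod n) :
    Prop where
  start_add_one : ∀ q, start (q + 1) = start q + w q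
  bijective : Function.Bijective fun p : Σ q, Fin (w q) => start p.1 + (p.2 : ℕ)

theorem exists_isCyclicPartition {m n : ℕ} [NeZero n] {w : Fin (m + 1) → ℕ} (hw : ∑ q, w q = n) :
    ∃ start : Fin (m + 1) → ZMod n, IsCyclicPartition w start := by
  refine ⟨fun q => ((∑ i : Fin q, w (Fin.castLE q.2.le i) : ℕ) : ZMod n), fun q => ?_, ?_⟩
  · rw [← Nat.cast_add]
    induction q using Fin.lastCases with
    | last =>
      rw [Fin.last_add_one]
      refine Eq.trans ?_ (congrArg Nat.cast (hw.symm.trans (Fin.sum_univ_castSucc w)))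
      exact (congrArg Nat.cast (Fin.sum_univ_zero _)).trans (by simp)
    | cast q =>
      rw [Fin.coeSucc_eq_succ]
      exact congrArg _ (Fin.sum_univ_castSucc (n := q) _)
  · have hcast : Function.Bijective fun i : Fin n => ((i : ℕ) : ZMod n) := by
      refine (Fintype.bijective_iff_injective_and_card _).mpr ⟨fun i j hij => ?_, by simp⟩
      rw [ZMod.natCast_eq_natCast_iff', Nat.mod_eq_of_lt i.2, Nat.mod_eq_of_lt j.2] at hij
      exact Fin.ext hij
    subst hw
    convert hcast.comp finSigmaFinEquiv.bijective using 2 with p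
    simp [finSigmaFinEquiv_apply]

namespace IsCyclicPartition
variable {Q n : ℕ} [NeZero Q] {w : Fin Q → ℕ} {start : Fin Q → ZMod n}

theorem exists_eq_start_add (h : IsCyclicPartition w start) (p : ZMod n) :
    ∃ q, ∃ i < w q, p = start q + i := by
  obtain ⟨⟨q, i⟩, rfl⟩ := h.bijective.surjective p
  exact ⟨q, i, i.2, rfl⟩

theorem start_add_inj (h : IsCyclicPartition w start) {q q' : Fin Q} {i i' : ℕ} (hi : i < w q)
    (hi' : i' < w q') : start q + i = start q' + i' ↔ q = q' ∧ i = i' := by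
  refine ⟨fun heq => ?_, by rintro ⟨rfl, rfl⟩; rfl⟩
  have := h.bijective.injective (a₁ := ⟨q, i, hi⟩) (a₂ := ⟨q', i', hi'⟩) heq
  simp only [Sigma.mk.injEq] at this
  obtain ⟨rfl, h⟩ := this
  exact ⟨rfl, by simpa using h⟩

theorem last_add_one {l : Fin Q → ℕ} (h : IsCyclicPartition (fun q => l q + 1) start) (q : Fin Q) :
    start q + l q + 1 = start (q + 1) + (0 : ℕ) := by
  rw [h.start_add_one]; push_cast; ring

theorem exists_bijective_of_forall_exists {V : Type*} [Fintype V] (h : IsCyclicPartition w start)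
    (hw : ∑ q, w q = Fintype.card V) {R : Fin Q → ℕ → V} (hR : ∀ v, ∃ q, ∃ i < w q, R q i = v) :
    ∃ f : ZMod n → V, Function.Bijective f ∧ ∀ q, ∀ i < w q, f (start q + i) = R q i := by
  let e := Equiv.ofBijective _ h.bijective
  let g : (Σ q, Fin (w q)) → V := fun p => R p.1 p.2
  have hg : Function.Bijective g := by
    refine (Fintype.bijective_iff_surjective_and_card g).mpr ⟨fun v => ?_, by simpa using hw⟩
    obtain ⟨q, i, hi, rfl⟩ := hR v
    exact ⟨⟨q, i, hi⟩, rfl⟩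
  refine ⟨g ∘ e.symm, hg.comp e.symm.bijective, fun q i hi => ?_⟩
  exact congrArg g (e.symm_apply_apply ⟨q, i, hi⟩)

end IsCyclicPartition

section Closing
variable {V : Type*} [Fintype V] {G : V → V → Prop} {m M n : ℕ} {ε : ZMod n → Bool}
  {l : Fin (m + 1) → ℕ} {start : Fin (m + 1) → ZMod n} {R : Fin (m + 1) → ℕ → V}

theorem IsCyclicPartition.exists_gap_slot_embedding
    (hcyc : IsCyclicPartition (fun q => l q + 1) start) (hl0 : l 0 = 4 * M) (hl : ∀ q, 0 < l q)
    {s : Fin (m + 1) → ℕ} (hs : ∀ q, s q < M) (hinj : Function.Injective s) :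
    ∃ a : Fin (m + 1) ⊕ Fin (m + 1) ↪ ZMod n, (∀ q, a (.inl q) = start q + l q) ∧
      (∀ q, a (.inr q) = start 0 + (4 * s q + 1 : ℕ)) ∧ ∀ i j, a i + 1 ≠ a j := by
  have hgap : ∀ q, l q < l q + 1 := fun q => Nat.lt_succ_self _
  have hslot : ∀ q, 4 * s q + 2 < l 0 + 1 := fun q => by have := hs q; omega
  have hgap_ne_slot : ∀ q t, t % 4 ≠ 0 → t < l 0 + 1 → start q + l q ≠ start 0 + t :=
    fun q t ht htl heq => by
      obtain ⟨rfl, heq⟩ := (hcyc.start_add_inj (hgap q) htl).mp heq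
      omega
  have hslot_add_one : ∀ q,
      start 0 + (4 * s q + 1 : ℕ) + 1 = start 0 + (4 * s q + 2 : ℕ) := fun q => by push_cast; ring
  refine ⟨⟨Sum.elim (fun q => start q + l q) fun q => start 0 + (4 * s q + 1 : ℕ), ?_⟩,
    fun q => rfl, fun q => rfl, ?_⟩
  · refine Function.Injective.sumElim (fun q q' h => ?_) (fun q q' h => hinj ?_) fun q q' => ?_
    · exact ((hcyc.start_add_inj (hgap q) (hgap q')).mp h).1
    · have := ((hcyc.start_add_inj (by grind) (by grind)).mp h).2
      omega
    · exact hgap_ne_slot q _ (by omega) (by grind)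
  · rintro (q | q) (q' | q') <;>
      simp only [Function.Embedding.coeFn_mk, Sum.elim_inl, Sum.elim_inr, hcyc.last_add_one,
        hslot_add_one]
    · rw [Ne, hcyc.start_add_inj (Nat.succ_pos _) (hgap q')]
      exact fun h => (hl q').ne h.2
    · rw [Ne, hcyc.start_add_inj (Nat.succ_pos _) (by grind)]
      exact fun h => absurd h.2 (by omega)
    · exact (hgap_ne_slot q' _ (by omega) (hslot q)).symm
    · rw [Ne, hcyc.start_add_inj (hslot q) (by grind)]
      exact fun h => absurd h.2 (by omega)

theorem IsCyclicPartition.exists_perm_forall_dirEdge {f : ZMod n → V}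
    (hcyc : IsCyclicPartition (fun q => l q + 1) start) (hl0 : l 0 = 4 * M) (hl : ∀ q, 0 < l q)
    (habs : IsAbsorbingPath G (fun i => ε (start 0 + i)) M (m + 1) (R 0))
    (hR : ∀ q, ∀ i, i + 1 < l q → DirEdge G (ε (start q + i)) (R q i) (R q (i + 1)))
    (hf : ∀ q, ∀ i < l q, f (start q + i) = R q i)
    (hspare : ∀ q : Fin (m + 1), f (start q + l q) = R 0 (4 * M + q)) :
    ∃ τ : Equiv.Perm (ZMod n), ∀ p, DirEdge G (ε p) (f (τ p)) (f (τ (p + 1))) := by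
  choose s hs hsq hmem using fun q : Fin (m + 1) => habs.insert q q.2
    (ε (start q + (l q - 1 : ℕ))) (ε (start q + l q)) (R q (l q - 1)) (R (q + 1) 0)
  simp only [mem_between] at hmem
  have hinj : Function.Injective s := fun q q' h => Fin.ext (by rw [← hsq q, ← hsq q', h])
  obtain ⟨a, hagap, haslot, hindep⟩ := hcyc.exists_gap_slot_embedding hl0 hl hs hinj
  have hfslot : ∀ q, f (a (.inr q)) = R 0 (4 * s q + 1) := fun q => by
    rw [haslot, hf 0 _ (by have := hs q; omega)]
  have hfgap : ∀ q, f (a (.inl q)) = R 0 (4 * M + q) := fun q => by rw [hagap, hspare]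
  have hsucc : ∀ q (t : ℕ), start q + t + 1 = start q + (t + 1 : ℕ) := fun q t => by
    push_cast; ring
  refine exists_perm_forall_edge_swap a (Equiv.sumComm _ _) hindep (fun p hp hp' => ?_)
    (fun i p hp => ?_) fun i => ?_
  · obtain ⟨q, i, hi, rfl⟩ := hcyc.exists_eq_start_add p
    have hi₀ : i ≠ l q := by rintro rfl; exact hp ⟨.inl q, hagap q⟩
    have hi₁ : i + 1 ≠ l q := fun h => hp' ⟨.inl q, by rw [hagap, ← h, hsucc]⟩
    rw [hsucc, hf q i (by omega), hf q (i + 1) (by omega)]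
    exact hR q i (by omega)
  · obtain q | q := i
    · obtain rfl : p = start q + (l q - 1 : ℕ) :=
        add_right_cancel (b := 1) (by rw [hp, hagap, hsucc, Nat.sub_add_cancel (hl q)])
      rw [Equiv.sumComm_apply, Sum.swap_inl, hfslot, hf q _ (Nat.sub_lt (hl q) one_pos)]
      exact (hmem q).1
    · obtain rfl : p = start 0 + (4 * s q : ℕ) :=
        add_right_cancel (b := 1) (by rw [hp, haslot, hsucc])
      rw [Equiv.sumComm_apply, Sum.swap_inr, hfgap, hf 0 _ (by have := hs q; omega), ← hsq q]
      exact habs.replace_left _ (hs q)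
  · obtain q | q := i
    · rw [Equiv.sumComm_apply, Sum.swap_inl, hfslot, hagap, hcyc.last_add_one, hf _ 0 (hl _)]
      exact (hmem q).2
    · rw [Equiv.sumComm_apply, Sum.swap_inr, hfgap, haslot, hsucc,
        hf 0 _ (by have := hs q; omega), ← hsq q]
      exact habs.replace_right _ (hs q)

end Closing

section Assembly
variable {V : Type*} [Fintype V] {G : V → V → Prop} {k m M : ℕ}

theorem exists_columns_covering_compl [NeZero k] {X : ℕ → V} {N : ℕ} {δ : ℝ}
    (hX : Set.InjOn X (range N)) (hcard : Fintype.card V = N + k * m)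
    (hδ0 : 0 ≤ δ) (hδ1 : 2 * δ ≤ 1 / 2)
    (hG : ∀ b x, (#{y | ¬ DirEdge G b x y} : ℝ) ≤ (1 / 2 - 2 * δ) * (k * m : ℕ))
    (hsmall : 4 * (k * m : ℝ) ^ 2 * Real.exp (-(δ ^ 2 * m / 8)) < 1) (σ : Fin m → ℕ → Bool) :
    ∃ Y : Fin m → ℕ → V, (∀ v, (∃ i < N, X i = v) ∨ ∃ j, ∃ i < k, Y j i = v) ∧
      ∀ j, ∀ i < k, DirEdge G (σ j i) (Y j i) (Y j (i + 1)) := by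
  let W := {v // v ∉ (range N).image X}
  have hW : Fintype.card W = k * m := by
    rw [Fintype.card_subtype_compl, Fintype.card_coe, card_image_of_injOn hX, card_range, hcard,
      Nat.add_sub_cancel_left]
  have hGW : ∀ b (x : W), (#{y : W | ¬ DirEdge (fun u v : W => G u v) b x y} : ℝ) ≤
      (1 / 2 - 2 * δ) * Fintype.card W := fun b x => by
    rw [hW]
    refine le_trans (Nat.cast_le.mpr ?_) (hG b x)
    refine card_le_card_of_injOn Subtype.val (fun y hy => ?_) Subtype.val_injective.injOn
    cases b <;> simpa [DirEdge] using hy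
  obtain ⟨Y, hcover, hY⟩ := exists_covering_columns hW hδ0 hδ1 hGW hsmall σ
  refine ⟨fun j i => Y j i, fun v => or_iff_not_imp_left.mpr fun hv => ?_, fun j i hi => ?_⟩
  · obtain ⟨j, i, hi, hji⟩ := hcover ⟨v, by simpa using hv⟩
    exact ⟨j, i, hi, congrArg Subtype.val hji⟩
  · have := hY j i hi
    revert this
    cases σ j i <;> exact id

theorem exists_bijective_forall_dirEdge [NeZero k] {T c : ℕ} {δ : ℝ}
    (hcard : Fintype.card V = 4 * M + (m + 1) + k * m) (hM : 0 < M) (hMT : (m + 1) * T ≤ M)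
    (hcodeg : ∀ b₁ b₂ x y, 4 * M + (m + 1) + c ≤ #(between G b₁ b₂ x y))
    (hT : 4 * (Fintype.card V : ℝ) ^ 2 * (1 - c / Fintype.card V) ^ T < 1)
    (hδ0 : 0 ≤ δ) (hδ1 : 2 * δ ≤ 1 / 2)
    (hG : ∀ b x, (#{y | ¬ DirEdge G b x y} : ℝ) ≤ (1 / 2 - 2 * δ) * (k * m : ℕ))
    (hsmall : 4 * (k * m : ℝ) ^ 2 * Real.exp (-(δ ^ 2 * m / 8)) < 1)
    (ε : ZMod (Fintype.card V) → Bool) :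
    ∃ f : ZMod (Fintype.card V) → V, Function.Bijective f ∧
      ∀ p, DirEdge G (ε p) (f p) (f (p + 1)) := by
  have : NeZero (Fintype.card V) := ⟨by rw [hcard]; omega⟩
  have : Nonempty V := Fintype.card_pos_iff.mp (NeZero.pos _)
  let l : Fin (m + 1) → ℕ := Fin.cons (4 * M) fun _ => k
  have hl : ∀ q, 0 < l q := Fin.cases (by simp [l, hM]) fun _ => NeZero.pos k
  have hsum : ∑ q, (l q + 1) = Fintype.card V := by
    simp only [Fin.sum_univ_succ, l, Fin.cons_zero, Fin.cons_succ, sum_const, card_univ,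
      Fintype.card_fin, smul_eq_mul, hcard]
    ring
  obtain ⟨start, hcyc⟩ := exists_isCyclicPartition hsum
  obtain ⟨X, hX⟩ := exists_isAbsorbingPath (fun i => ε (start 0 + i)) hMT hcodeg hT
  obtain ⟨Y, hcover, hY⟩ := exists_columns_covering_compl hX.injOn hcard hδ0 hδ1 hG
    hsmall fun j i => ε (start j.succ + i)
  let R : Fin (m + 1) → ℕ → V := Fin.cons X Y
  obtain ⟨f, hf, hfR⟩ := hcyc.exists_bijective_of_forall_exists hsum
    (R := fun q i => if i < l q then R q i else X (4 * M + q)) fun v => by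
      obtain ⟨i, hi, rfl⟩ | ⟨j, i, hi, rfl⟩ := hcover v
      · by_cases h : i < 4 * M
        · exact ⟨0, i, Nat.lt_succ_of_lt h, if_pos h⟩
        · refine ⟨⟨i - 4 * M, by omega⟩, _, Nat.lt_succ_self _, (if_neg (lt_irrefl _)).trans ?_⟩
          exact congrArg X (by simp; omega)
      · exact ⟨j.succ, i, Nat.lt_succ_of_lt hi, if_pos hi⟩
  obtain ⟨τ, hτ⟩ := hcyc.exists_perm_forall_dirEdge (R := R) (f := f) rfl hl hX
    (Fin.cases hX.edge fun j i hi => hY j i (Nat.lt_of_succ_lt hi))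
    (fun q i hi => (hfR q i (Nat.lt_succ_of_lt hi)).trans (if_pos hi))
    (fun q => (hfR q (l q) (Nat.lt_succ_self _)).trans (if_neg (lt_irrefl _)))
  exact ⟨f ∘ τ, hf.comp τ.bijective, hτ⟩

end Assembly

/-! ### Parameters -/

theorem exists_mul_modEq_of_coprime {r m : ℕ} [NeZero m] (hrm : r.Coprime m) (a b : ℕ) :
    ∃ M, a ≤ M ∧ M < a + m ∧ r * M ≡ b [MOD m] := by
  refine ⟨a + ((b : ZMod m) * (r : ZMod m)⁻¹ - a).val, le_self_add,
    Nat.add_lt_add_left (ZMod.val_lt _) a, ?_⟩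
  rw [← ZMod.natCast_eq_natCast_iff]
  push_cast
  rw [ZMod.natCast_val, ZMod.cast_id, add_sub_cancel, mul_left_comm, ZMod.coe_mul_inv_eq_one r hrm,
    mul_one]

theorem exists_odd_nat_mem_Icc {y : ℝ} (hy : 0 ≤ y) : ∃ m : ℕ, Odd m ∧ y ≤ m ∧ m ≤ y + 2 := by
  have hle := Nat.floor_le (show 0 ≤ (y + 1) / 2 by linarith)
  have hlt := Nat.lt_floor_add_one ((y + 1) / 2)
  exact ⟨2 * ⌊(y + 1) / 2⌋₊ + 1, ⟨_, rfl⟩, by push_cast; linarith, by push_cast; linarith⟩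

theorem four_mul_sq_mul_exp_neg_lt_one {n t : ℝ} (hn : 4 < n) (ht : 3 * Real.log n ≤ t) :
    4 * n ^ 2 * Real.exp (-t) < 1 := by
  have hpos : 0 < n := by linarith
  calc 4 * n ^ 2 * Real.exp (-t) ≤ 4 * n ^ 2 * Real.exp (-(3 * Real.log n)) := by gcongr
    _ = 4 * n ^ 2 * (n ^ 3)⁻¹ := by
        rw [Real.exp_neg, mul_comm, ← Real.log_rpow hpos, Real.exp_log (by positivity)]
        norm_cast
        ring
    _ = 4 / n := by field_simp
    _ < 1 := (div_lt_one hpos).mpr hn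

theorem absorber_size_le {x L : ℝ} (hx : 2 ≤ x) (hL : 1 ≤ L) {m T M : ℕ}
    (hm : m ≤ 384 * x ^ 2 * L + 2) (hT : T ≤ 3 * x * L + 1) (hM : M ≤ (m + 1) * T + m) :
    ((4 * M + (m + 1) : ℕ) : ℝ) + 1 ≤ 10 ^ 4 * x ^ 3 * L ^ 2 := by
  have hz : 4 ≤ x ^ 2 * L := by nlinarith
  have hw : 2 ≤ x * L := by nlinarith
  have hprod : ((m : ℝ) + 1) * T ≤ (384 * (x ^ 2 * L) + 3) * (3 * (x * L) + 1) :=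
    mul_le_mul (by linarith) (by linarith) (by positivity) (by positivity)
  rify at hM
  push_cast
  have hzw : 10 ^ 4 * x ^ 3 * L ^ 2 = 10 ^ 4 * ((x ^ 2 * L) * (x * L)) := by ring
  rw [hzw]
  nlinarith [mul_nonneg (sub_nonneg.mpr hz) (sub_nonneg.mpr hw)]

-- Here `x = n / d`, where the degrees exceed `n / 2` by `d`, and `L = log n`. The bound on `m`
-- gives `δ ^ 2 * m / 8 ≥ 3 * L` for `δ = 1 / (4 * x)`, the one on `T` gives `T * d / n ≥ 3 * L`.
-- As `m` is odd, `4 * M` can be prescribed modulo `m`, so that the remaining vertices fill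
-- complete rows.
theorem exists_block_parameters {x L : ℝ} (hx : 2 ≤ x) (hL : 1 ≤ L) {n : ℕ}
    (hn : (n : ℝ) = 10 ^ 4 * x ^ 4 * L ^ 2) :
    ∃ m T M k : ℕ, 0 < M ∧ 0 < k ∧ n = 4 * M + (m + 1) + k * m ∧ (m + 1) * T ≤ M ∧
      3 * x * L ≤ T ∧ 384 * x ^ 2 * L ≤ m ∧
      ((4 * M + (m + 1) : ℕ) : ℝ) + 1 ≤ 10 ^ 4 * x ^ 3 * L ^ 2 := by
  obtain ⟨m, hodd, hm, hm'⟩ := exists_odd_nat_mem_Icc (y := 384 * x ^ 2 * L) (by positivity)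
  have : NeZero m := ⟨hodd.pos.ne'⟩
  have hT := Nat.le_ceil (3 * x * L)
  have hT' := Nat.ceil_lt_add_one (show 0 ≤ 3 * x * L by positivity)
  generalize ⌈3 * x * L⌉₊ = T at hT hT'
  have hTpos : 0 < T := by
    have : 0 < 3 * x * L := by positivity
    exact_mod_cast this.trans_le hT
  obtain ⟨M, hM, hM', hmod⟩ := exists_mul_modEq_of_coprime
    (Nat.Coprime.pow_left 2 hodd.coprime_two_left) ((m + 1) * T) (n - (m + 1))
  have hsize := absorber_size_le hx hL hm' hT'.le hM'.le
  have hlt : 4 * M + (m + 1) < n := by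
    have : (10 : ℝ) ^ 4 * x ^ 3 * L ^ 2 ≤ n := by
      rw [hn]
      gcongr <;> linarith
    exact_mod_cast (lt_add_one _).trans_le (hsize.trans this)
  have hdvd : m ∣ n - (4 * M + (m + 1)) := by
    have := (Nat.modEq_iff_dvd' (by omega)).mp hmod
    rwa [Nat.sub_sub, add_comm (m + 1)] at this
  obtain ⟨k, hk⟩ := hdvd
  refine ⟨m, T, M, k, ?_, ?_, ?_, hM, hT, hm, hsize⟩
  · exact (Nat.mul_pos (Nat.succ_pos m) hTpos).trans_le hM
  · rcases Nat.eq_zero_or_pos k with rfl | h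
    · omega
    · exact h
  · rw [mul_comm k m]; omega

theorem le_card_filter_dirEdge {V : Type*} [Fintype V] {G : V → V → Prop} {a : ℝ}
    (h : ∀ x, a ≤ outDeg G x ∧ a ≤ inDeg G x) (b : Bool) (x : V) :
    a ≤ #{y | DirEdge G b x y} := by
  cases b
  · simpa [DirEdge, inDeg, Fintype.card_subtype] using (h x).2
  · simpa [DirEdge, outDeg, Fintype.card_subtype] using (h x).1

theorem one_sub_pow_le_exp_neg {p : ℝ} (hp : p ≤ 1) (T : ℕ) :
    (1 - p) ^ T ≤ Real.exp (-(T * p)) := by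
  rw [← mul_neg, Real.exp_nat_mul]
  exact pow_le_pow_left₀ (sub_nonneg.mpr hp) (Real.one_sub_le_exp_neg p) T

section Parameters
variable {V : Type*} [Fintype V] {G : V → V → Prop}

theorem card_filter_not_dirEdge_le {d : ℝ}
    (hdeg : ∀ b x, (Fintype.card V : ℝ) / 2 + d ≤ #{y | DirEdge G b x y}) (b : Bool) (x : V) :
    (#{y | ¬ DirEdge G b x y} : ℝ) ≤ Fintype.card V / 2 - d := by
  have hadd : (#{y | DirEdge G b x y} : ℝ) + #{y | ¬ DirEdge G b x y} = Fintype.card V := by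
    exact_mod_cast card_filter_add_card_filter_not (s := univ) _
  linarith [hdeg b x]

theorem exists_bijective_forall_dirEdge_of_degree {x : ℝ} (hx : 2 ≤ x)
    (hlog : 1 ≤ Real.log (Fintype.card V))
    (hcard : (Fintype.card V : ℝ) = 10 ^ 4 * x ^ 4 * Real.log (Fintype.card V) ^ 2)
    (hdeg : ∀ b v, (Fintype.card V : ℝ) / 2 + 10 ^ 4 * x ^ 3 * Real.log (Fintype.card V) ^ 2 ≤
      #{w | DirEdge G b v w}) (ε : ZMod (Fintype.card V) → Bool) :
    ∃ f : ZMod (Fintype.card V) → V, Function.Bijective f ∧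
      ∀ p, DirEdge G (ε p) (f p) (f (p + 1)) := by
  obtain ⟨m, T, M, k, hM, hk, hn, hMT, hT, hm, hsize⟩ := exists_block_parameters hx hlog hcard
  have : NeZero k := ⟨hk.ne'⟩
  set N := (Fintype.card V : ℝ) with hN
  set L := Real.log N
  set d : ℝ := 10 ^ 4 * x ^ 3 * L ^ 2 with hd
  have hNd : N = x * d := by rw [hcard, hd]; ring
  have hd4 : 4 < d := by
    have : (2 : ℝ) ^ 3 * 1 ^ 2 ≤ x ^ 3 * L ^ 2 := by gcongr
    linarith
  have hN4 : 4 < N := by nlinarith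
  have hNs : N = ((4 * M + (m + 1) : ℕ) : ℝ) + (k * m : ℕ) := by rw [hN, hn]; push_cast; ring
  have hkm : ((k * m : ℕ) : ℝ) ≤ N := by
    rw [hNs]; exact le_add_of_nonneg_left (Nat.cast_nonneg _)
  have hc := Nat.le_ceil d
  have hc' := Nat.ceil_lt_add_one (show 0 ≤ d by linarith)
  refine exists_bijective_forall_dirEdge (T := T) (c := ⌈d⌉₊) (δ := 1 / (4 * x)) hn hM hMT
    (fun b₁ b₂ v w => ?_) ?_ (by positivity) ?_ (fun b v => ?_) ?_ ε
  · have := two_mul_le_card_between hdeg b₁ b₂ v w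
    rify at hsize ⊢
    linarith
  · have hcN : ⌈d⌉₊ / N ≤ 1 := (div_le_one (by linarith)).mpr (by nlinarith)
    refine lt_of_le_of_lt (mul_le_mul_of_nonneg_left (one_sub_pow_le_exp_neg hcN T)
      (by positivity)) (four_mul_sq_mul_exp_neg_lt_one hN4 ?_)
    calc 3 * L = 3 * x * L * (d / N) := by rw [hNd]; field_simp
      _ ≤ T * (⌈d⌉₊ / N) := by gcongr
  · rw [mul_one_div, div_le_div_iff₀ (by positivity) two_pos]
    linarith
  · refine (card_filter_not_dirEdge_le hdeg b v).trans ?_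
    have : 1 / (4 * x) * (k * m : ℕ) ≤ d / 4 :=
      (mul_le_mul_of_nonneg_left hkm (by positivity)).trans_eq (by rw [hNd]; field_simp)
    linarith
  · refine lt_of_le_of_lt ?_ (four_mul_sq_mul_exp_neg_lt_one hN4
      (t := (1 / (4 * x)) ^ 2 * m / 8) ?_)
    · gcongr
      exact_mod_cast hkm
    · calc 3 * L = (1 / (4 * x)) ^ 2 * (384 * x ^ 2 * L) / 8 := by field_simp; norm_num
        _ ≤ _ := by gcongr

end Parameters

theorem exists_ratio_of_excess_le_half {N d : ℝ} (hN : 2 ≤ N)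
    (hd : d = 10 * N ^ (3 / 4 : ℝ) * √(Real.log N)) (hdN : d ≤ N / 2) :
    ∃ x, 2 ≤ x ∧ 1 ≤ Real.log N ∧ N = 10 ^ 4 * x ^ 4 * Real.log N ^ 2 ∧
      d = 10 ^ 4 * x ^ 3 * Real.log N ^ 2 := by
  have hlog : 0.69 < Real.log N := by
    linarith [Real.log_le_log two_pos hN, Real.log_two_gt_d9]
  set L := Real.log N with hL
  have hNpos : 0 < N := by linarith
  have hdpos : 0 < d := by
    have : 0 < √L := Real.sqrt_pos.mpr (by linarith)
    rw [hd]; positivity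
  have hd4 : d ^ 4 = 10 ^ 4 * N ^ 3 * L ^ 2 := by
    have hrpow : (N ^ (3 / 4 : ℝ)) ^ 4 = N ^ 3 := by
      rw [← Real.rpow_natCast, ← Real.rpow_mul hNpos.le, ← Real.rpow_natCast]; norm_num
    have hsqrt : √L ^ 4 = L ^ 2 := by
      rw [show 4 = 2 * 2 from rfl, pow_mul, Real.sq_sqrt (by linarith)]
    rw [hd, mul_pow, mul_pow, hrpow, hsqrt]
  have hcard : N = 10 ^ 4 * (N / d) ^ 4 * L ^ 2 := by
    rw [div_pow, hd4]; field_simp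
  have hx : 2 ≤ N / d := by rw [le_div_iff₀ hdpos]; linarith
  refine ⟨N / d, hx, ?_, hcard, ?_⟩
  · rw [hL, Real.le_log_iff_exp_le hNpos]
    have : (2 : ℝ) ^ 4 * 0.69 ^ 2 ≤ (N / d) ^ 4 * L ^ 2 := by gcongr
    linarith [Real.exp_one_lt_d9]
  · calc d = d ^ 4 / d ^ 3 := by field_simp
      _ = _ := by rw [hd4]; ring

theorem eventually_ten_mul_rpow_mul_sqrt_log_le :
    ∀ᶠ n : ℕ in Filter.atTop,
      10 * (n : ℝ) ^ ((3 : ℝ) / 4) * √(Real.log n) ≤ (n : ℝ) ^ ((5 : ℝ) / 6) := by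
  have hlog := (isLittleO_log_rpow_atTop (show (0 : ℝ) < 1 / 6 by norm_num)).def
    (show (0 : ℝ) < 1 / 100 by norm_num)
  filter_upwards [tendsto_natCast_atTop_atTop.eventually hlog, Filter.eventually_ge_atTop 1]
    with n hn hn1
  have hn1' : (1 : ℝ) ≤ n := mod_cast hn1
  have hpos : (0 : ℝ) < n := by linarith
  have hsqrt : √(Real.log n) ≤ (n : ℝ) ^ (1 / 12 : ℝ) / 10 := by
    rw [Real.sqrt_le_iff]
    refine ⟨by positivity, ?_⟩
    rw [Real.norm_of_nonneg (Real.log_nonneg hn1'), Real.norm_of_nonneg (by positivity)] at hn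
    rw [div_pow, ← Real.rpow_natCast, ← Real.rpow_mul hpos.le]
    norm_num at hn ⊢
    linarith
  calc 10 * (n : ℝ) ^ ((3 : ℝ) / 4) * √(Real.log n)
      ≤ 10 * (n : ℝ) ^ ((3 : ℝ) / 4) * ((n : ℝ) ^ (1 / 12 : ℝ) / 10) := by gcongr
    _ = (n : ℝ) ^ ((3 : ℝ) / 4) * (n : ℝ) ^ (1 / 12 : ℝ) := by ring
    _ = (n : ℝ) ^ ((5 : ℝ) / 6) := by rw [← Real.rpow_add hpos]; norm_num

end

theorem digraph_all_orientations_hamilton_general {V : Type*} [Fintype V] [Nontrivial V]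
    (G : V → V → Prop)
    (hdeg : ∀ x : V,
      (Fintype.card V : ℝ) / 2 + 10 * (Fintype.card V : ℝ) ^ ((3 : ℝ) / 4) *
          √(Real.log (Fintype.card V)) ≤ (outDeg G x : ℝ) ∧
      (Fintype.card V : ℝ) / 2 + 10 * (Fintype.card V : ℝ) ^ ((3 : ℝ) / 4) *
          √(Real.log (Fintype.card V)) ≤ (inDeg G x : ℝ))
    (ε : ZMod (Fintype.card V) → Bool) :
    ∃ f : ZMod (Fintype.card V) → V, Function.Bijective f ∧
      ∀ i, (ε i = true → G (f i) (f (i + 1))) ∧ (ε i = false → G (f (i + 1)) (f i)) := by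
  classical
  have hdir := le_card_filter_dirEdge hdeg
  have hle : 10 * (Fintype.card V : ℝ) ^ ((3 : ℝ) / 4) * √(Real.log (Fintype.card V)) ≤
      Fintype.card V / 2 := by
    have := (hdir true (Classical.arbitrary V)).trans (Nat.cast_le.mpr (Finset.card_le_univ _))
    linarith
  obtain ⟨x, hx, hlog, hcard, hexcess⟩ :=
    exists_ratio_of_excess_le_half (mod_cast Fintype.one_lt_card) rfl hle
  rw [hexcess] at hdir
  obtain ⟨f, hf, hedge⟩ := exists_bijective_forall_dirEdge_of_degree hx hlog hcard hdir ε
  refine ⟨f, hf, fun i => ⟨fun hi => ?_, fun hi => ?_⟩⟩ <;>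
    simpa [DirEdge, hi] using hedge i

/-- There exists n₀ such that every digraph on n ≥ n₀ vertices with minimum semidegree
at least n/2 + n^{5/6} contains every orientation of a Hamilton cycle: for every direction
pattern ε : ZMod n → Bool there is a cyclic ordering f of all vertices such that for each i
the edge f(i) → f(i+1) is present when ε i = true, and the edge f(i+1) → f(i) is present
when ε i = false. -/
theorem digraph_all_orientations_hamilton :
    ∃ n₀ : ℕ, ∀ (V : Type) [Fintype V] (G : V → V → Prop),
      Irreflexive G →
      n₀ ≤ Fintype.card V →
      (∀ x : V,
        (Fintype.card V : ℝ) / 2 + (Fintype.card V : ℝ) ^ ((5 : ℝ) / 6) ≤ (outDeg G x : ℝ) ∧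
        (Fintype.card V : ℝ) / 2 + (Fintype.card V : ℝ) ^ ((5 : ℝ) / 6) ≤ (inDeg G x : ℝ)) →
      ∀ ε : ZMod (Fintype.card V) → Bool,
        ∃ f : ZMod (Fintype.card V) → V, Function.Bijective f ∧
          ∀ i, (ε i = true → G (f i) (f (i + 1))) ∧ (ε i = false → G (f (i + 1)) (f i)) := by
  obtain ⟨n₀, hn₀⟩ := Filter.eventually_atTop.mp
    (eventually_ten_mul_rpow_mul_sqrt_log_le.and (Filter.eventually_gt_atTop 1))
  refine ⟨n₀, fun V _ G _ hcard hdeg => ?_⟩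
  obtain ⟨hexcess, hV⟩ := hn₀ _ hcard
  have : Nontrivial V := Fintype.one_lt_card_iff_nontrivial.mp hV
  exact digraph_all_orientations_hamilton_general G fun x =>
    ⟨(add_le_add_right hexcess _).trans (hdeg x).1, (add_le_add_right hexcess _).trans (hdeg x).2⟩
end
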